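/- Let γ > 1, τ > 0, R > 0, and let ρ₀, S₀ ∈ C¹(ℝ) with ρ₀(x) > 0 for all x, ρ₀(x) = 1 and S₀(x) = 0 for |x| ≥ R, and ∫_ℝ (ρ₀(x) − 1) dx ≥ 0. Set σ := √(γ + 1/τ) and choose σ̃ > 0 with σ̃² = max{σ², 1/(8 max ρ₀)}, and L > 0 with (L/2) min ρ₀ > max{√(8 max ρ₀), 16 σ̃ max ρ₀}. Put H₀ := ∫_ℝ [ (ρ₀^γ − 1 − γ(ρ₀ − 1))/(γ−1) + τρ₀S₀²/2 ] dx, and choose an even integer M ≥ max{4, R} with H₀ + (max ρ₀) L²M ≤ 2σ̃M² max ρ₀. Let u₀ : ℝ → ℝ be continuously differentiable, odd, with |u₀| ≤ L, u₀ = L on [1, M−1], u₀ = 0 outside [−M, M], and ∫ u₀² ≤ 2L²M. Suppose T ∈ (0, ∞] and (ρ, u, S) ∈ C¹([0,T) × ℝ; ℝ³) solves the relaxation system ρ_t + (ρu)_x = 0, ρu_t + ρuu_x + (ρ^γ)_x = S_x, τρ(S_t + uS_x) − u_x = −S with ρ > 0, with initial data (ρ(0,·), u(0,·), S(0,·)) =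 (ρ₀, u₀, S₀), such that (ρ, u, S) and their first-order partial derivatives are bounded on [0,t] × ℝ for each t ∈ [0,T). Then T < ∞: the solution cannot exist globally in time. -/

import Mathlib

open MeasureTheory

/-- Time partial derivative, taken within the time interval `[0, T)`, `T ∈ (0,∞]`
being modelled as an extended real number. -/
noncomputable def pderivT (T : EReal) (f : ℝ × ℝ → ℝ) (p : ℝ × ℝ) : ℝ :=
  derivWithin (fun s => f (s, p.2)) {s : ℝ | 0 ≤ s ∧ (s : EReal) < T} p.1

/-- Space partial derivative. -/
noncomputable def pderivX (f : ℝ × ℝ → ℝ) (p : ℝ × ℝ) : ℝ :=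
  deriv (fun y => f (p.1, y)) p.2

/-!
Since the energy relative to the reference state `(1, 0, 0)` decreases in backward cones, the
disturbance at time `t` is confined to `|x| ≤ M + σ t`. There the first moment `F` of the momentum
has derivative `∫ (ρ u² + ρ ^ γ - 1 - S)`: by Cauchy–Schwarz the kinetic part is at least
`F² / (2 P (M + σ t)³)` with `P = max ρ₀`, by Bernoulli's inequality the pressure part is at least
`γ` times the conserved mass excess, hence nonnegative, and the stress is absorbed by Young's
inequality and the dissipated energy. The resulting Riccati inequality forces `F` to blow up before
time `M / σ` as soon as `F 0 > 16 σ P M²`, and the plateau profile gives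
`F 0 ≥ (L / 2) (min ρ₀) M²`.
-/

open Set Filter Topology

/-! ### Functions on space-time -/

/-- The space-time domain `[0, T) × ℝ` of a solution with existence time `T`. -/
def timeStrip (T : EReal) : Set (ℝ × ℝ) := {p | 0 ≤ p.1 ∧ (p.1 : EReal) < T}

section PartialDerivatives

variable {T : EReal} {f : ℝ × ℝ → ℝ} {t x : ℝ}

lemma mem_interior_timeStrip (ht : 0 < t) (hT : (t : EReal) < T) :
    (t, x) ∈ interior (timeStrip T) := by
  have hopen : IsOpen {p : ℝ × ℝ | 0 < p.1 ∧ (p.1 : EReal) < T} :=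
    (isOpen_lt continuous_const continuous_fst).inter
      (isOpen_lt (continuous_coe_real_ereal.comp continuous_fst) continuous_const)
  have hsub : {p : ℝ × ℝ | 0 < p.1 ∧ (p.1 : EReal) < T} ⊆ timeStrip T :=
    fun p hp => ⟨hp.1.le, hp.2⟩
  exact interior_maximal hsub hopen ⟨ht, hT⟩

lemma differentiableAt_of_mem_interior_timeStrip (hf : ContDiffOn ℝ 1 f (timeStrip T))
    {p : ℝ × ℝ} (hp : p ∈ interior (timeStrip T)) : DifferentiableAt ℝ f p :=
  (hf.contDiffAt (mem_interior_iff_mem_nhds.1 hp)).differentiableAt one_ne_zero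

lemma hasDerivAt_pderivX (hf : DifferentiableAt ℝ f (t, x)) :
    HasDerivAt (fun y => f (t, y)) (pderivX f (t, x)) x :=
  (hf.comp x (by fun_prop : DifferentiableAt ℝ (fun y : ℝ => (t, y)) x)).hasDerivAt

lemma pderivT_eq_deriv (hp : (t, x) ∈ interior (timeStrip T)) :
    pderivT T f (t, x) = deriv (fun s => f (s, x)) t := by
  refine derivWithin_of_mem_nhds ?_
  have hslice : Continuous fun s : ℝ => (s, x) := by fun_prop
  exact hslice.continuousAt.preimage_mem_nhds (mem_interior_iff_mem_nhds.1 hp)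

lemma hasDerivAt_pderivT (hp : (t, x) ∈ interior (timeStrip T))
    (hf : DifferentiableAt ℝ f (t, x)) :
    HasDerivAt (fun s => f (s, x)) (pderivT T f (t, x)) t := by
  rw [pderivT_eq_deriv hp]
  exact (hf.comp t (by fun_prop : DifferentiableAt ℝ (fun s : ℝ => (s, x)) t)).hasDerivAt

lemma pderivT_eq_zero (hp : (t, x) ∈ interior (timeStrip T)) (hf : ∀ᶠ s in 𝓝 t, f (s, x) = 0) :
    pderivT T f (t, x) = 0 := by
  rw [pderivT_eq_deriv hp]
  exact (EventuallyEq.deriv_eq hf).trans (deriv_const t 0)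

lemma pderivT_eq_fderiv (hp : (t, x) ∈ interior (timeStrip T))
    (hf : DifferentiableAt ℝ f (t, x)) :
    pderivT T f (t, x) = fderiv ℝ f (t, x) (1, 0) := by
  rw [pderivT_eq_deriv hp]
  exact
    (hf.hasFDerivAt.comp_hasDerivAt t ((hasDerivAt_id t).prodMk (hasDerivAt_const t x))).deriv

lemma continuousOn_pderivT (hf : ContDiffOn ℝ 1 f (timeStrip T)) :
    ContinuousOn (pderivT T f) (interior (timeStrip T)) :=
  (((hf.mono interior_subset).continuousOn_fderiv_of_isOpen isOpen_interior le_rfl).clm_apply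
    continuousOn_const).congr fun _ hp =>
      pderivT_eq_fderiv hp (differentiableAt_of_mem_interior_timeStrip hf hp)

lemma continuous_slice {s : Set (ℝ × ℝ)} (hf : ContinuousOn f s) (ht : ∀ x, (t, x) ∈ s) :
    Continuous fun x => f (t, x) :=
  hf.comp_continuous (by fun_prop) ht

lemma contDiff_slice (hf : ContDiffOn ℝ 1 f (timeStrip T)) (ht : ∀ x, (t, x) ∈ timeStrip T) :
    ContDiff ℝ 1 fun x => f (t, x) :=
  hf.comp_contDiff (by fun_prop) ht

end PartialDerivatives

section Integrals

variable {T : EReal} {e f g : ℝ × ℝ → ℝ} {K : Set ℝ} {t : ℝ}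

lemma integrable_slice {s : Set (ℝ × ℝ)} (he : ContinuousOn e s) (ht : ∀ x, (t, x) ∈ s)
    (hK : IsCompact K) (heK : ∀ x ∉ K, e (t, x) = 0) : Integrable fun x => e (t, x) :=
  (continuous_slice he ht).integrable_of_hasCompactSupport (HasCompactSupport.intro hK heK)

lemma continuousOn_integral_slice {I : Set ℝ} (he : ContinuousOn e (timeStrip T))
    (hI : ∀ s ∈ I, 0 ≤ s ∧ (s : EReal) < T) (hK : IsCompact K)
    (heK : ∀ s ∈ I, ∀ x ∉ K, e (s, x) = 0) :
    ContinuousOn (fun s => ∫ x, e (s, x)) I :=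
  continuousOn_integral_of_compact_support hK (he.mono fun p hp => hI p.1 hp.1)
    fun s x hs hx => heK s hs x hx

lemma hasDerivAt_integral_pderivT (he : ContDiffOn ℝ 1 e (timeStrip T)) (ht : 0 < t)
    (htT : (t : EReal) < T) (hK : IsCompact K) (heK : ∀ᶠ s in 𝓝 t, ∀ x ∉ K, e (s, x) = 0) :
    HasDerivAt (fun s => ∫ x, e (s, x)) (∫ x, pderivT T e (t, x)) t := by
  have hnear : ∀ᶠ s : ℝ in 𝓝 t, 0 < s ∧ (s : EReal) < T :=
    (lt_mem_nhds ht).and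
      (continuous_coe_real_ereal.continuousAt.eventually_lt continuousAt_const htT)
  obtain ⟨a, b, hab, hI, hsub⟩ := exists_Icc_mem_subset_of_mem_nhds hnear
  have hint : ∀ s ∈ Icc a b, ∀ x, (s, x) ∈ interior (timeStrip T) := fun s hs x =>
    mem_interior_timeStrip (hsub hs).1 (hsub hs).2
  have hcont : ContinuousOn (pderivT T e) (Icc a b ×ˢ K) :=
    (continuousOn_pderivT he).mono fun p hp => hint p.1 hp.1 p.2
  obtain ⟨C, hC⟩ := (isCompact_Icc.prod hK).exists_bound_of_continuousOn hcont
  have hslice : ∀ s ∈ Icc a b, Continuous fun x => e (s, x) := fun s hs =>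
    continuous_slice he.continuousOn fun x => interior_subset (hint s hs x)
  have key := hasDerivAt_integral_of_dominated_loc_of_deriv_le (μ := volume.restrict K)
    (F := fun s x => e (s, x)) (F' := fun s x => pderivT T e (s, x)) (bound := fun _ => C) hI
    (mem_of_superset hI fun s hs => (hslice s hs).aestronglyMeasurable)
    ((hslice t hab).continuousOn.integrableOn_compact hK)
    (continuous_slice (continuousOn_pderivT he) (hint t hab)).aestronglyMeasurable
    ((ae_restrict_mem hK.measurableSet).mono fun x hx s hs => hC (s, x) ⟨hs, hx⟩)
    (integrableOn_const hK.measure_lt_top.ne)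
    (Eventually.of_forall fun x s hs => hasDerivAt_pderivT (hint s hs x)
      (differentiableAt_of_mem_interior_timeStrip he (hint s hs x)))
  have hderivK : ∀ x ∉ K, pderivT T e (t, x) = 0 := fun x hx =>
    pderivT_eq_zero (hint t hab x) (heK.mono fun s hs => hs x hx)
  rw [← setIntegral_eq_integral_of_forall_compl_eq_zero hderivK]
  exact key.2.congr_of_eventuallyEq
    (heK.mono fun s hs => (setIntegral_eq_integral_of_forall_compl_eq_zero hs).symm)

lemma integral_deriv_eq_zero_of_hasCompactSupport {φ : ℝ → ℝ} (hφ : ContDiff ℝ 1 φ)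
    (hsupp : HasCompactSupport φ) : ∫ x, deriv φ x = 0 :=
  integral_eq_zero_of_hasDerivAt_of_integrable
    (fun x => (hφ.differentiable one_ne_zero x).hasDerivAt)
    ((hφ.continuous_deriv le_rfl).integrable_of_hasCompactSupport hsupp.deriv)
    (hφ.continuous.integrable_of_hasCompactSupport hsupp)

end Integrals

/-! ### Balance laws -/

/-- The scalar balance law `∂ₜ e + ∂ₓ f = g` in classical form, with density `e`, flux `f` and
source `g`. It is imposed for positive times only, which is all that integration in time needs. -/
structure IsBalanceLaw (T : EReal) (e f g : ℝ × ℝ → ℝ) : Prop where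
  contDiffOn_density : ContDiffOn ℝ 1 e (timeStrip T)
  contDiffOn_flux : ContDiffOn ℝ 1 f (timeStrip T)
  pderivT_add_pderivX : ∀ p ∈ interior (timeStrip T), pderivT T e p + pderivX f p = g p

namespace IsBalanceLaw

variable {T : EReal} {e f g w : ℝ × ℝ → ℝ}

lemma mul_weight (h : IsBalanceLaw T e f g) (hw : ContDiff ℝ 1 w) :
    IsBalanceLaw T (fun p => w p * e p) (fun p => w p * f p)
      (fun p => w p * g p + (pderivT T w p * e p + pderivX w p * f p)) where
  contDiffOn_density := hw.contDiffOn.mul h.contDiffOn_density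
  contDiffOn_flux := hw.contDiffOn.mul h.contDiffOn_flux
  pderivT_add_pderivX := by
    rintro ⟨t, x⟩ hp
    have hwd : DifferentiableAt ℝ w (t, x) := hw.differentiable one_ne_zero _
    have hed := differentiableAt_of_mem_interior_timeStrip h.contDiffOn_density hp
    have hfd := differentiableAt_of_mem_interior_timeStrip h.contDiffOn_flux hp
    have htime : pderivT T (fun p => w p * e p) (t, x)
        = pderivT T w (t, x) * e (t, x) + w (t, x) * pderivT T e (t, x) := by
      rw [pderivT_eq_deriv hp]
      exact ((hasDerivAt_pderivT hp hwd).mul (hasDerivAt_pderivT hp hed)).deriv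
    have hspace : pderivX (fun p => w p * f p) (t, x)
        = pderivX w (t, x) * f (t, x) + w (t, x) * pderivX f (t, x) :=
      ((hasDerivAt_pderivX hwd).mul (hasDerivAt_pderivX hfd)).deriv
    rw [htime, hspace, ← h.pderivT_add_pderivX _ hp]
    ring

lemma hasDerivAt_integral (h : IsBalanceLaw T e f g) {t : ℝ} (ht : 0 < t) (htT : (t : EReal) < T)
    {K : Set ℝ} (hK : IsCompact K) (heK : ∀ᶠ s in 𝓝 t, ∀ x ∉ K, e (s, x) = 0)
    (hfK : ∀ x ∉ K, f (t, x) = 0) :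
    HasDerivAt (fun s => ∫ x, e (s, x)) (∫ x, g (t, x)) t := by
  have hp : ∀ x, (t, x) ∈ interior (timeStrip T) := fun x => mem_interior_timeStrip ht htT
  have hflux : ContDiff ℝ 1 fun x => f (t, x) :=
    contDiff_slice h.contDiffOn_flux fun x => interior_subset (hp x)
  have hfsupp : HasCompactSupport fun x => f (t, x) := HasCompactSupport.intro hK hfK
  have hfint : Integrable fun x => pderivX f (t, x) :=
    (hflux.continuous_deriv le_rfl).integrable_of_hasCompactSupport hfsupp.deriv
  have heint : Integrable fun x => pderivT T e (t, x) :=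
    integrable_slice (continuousOn_pderivT h.contDiffOn_density) hp hK fun x hx =>
      pderivT_eq_zero (hp x) (heK.mono fun s hs => hs x hx)
  have hsource : ∫ x, g (t, x) = ∫ x, pderivT T e (t, x) := by
    simp only [← h.pderivT_add_pderivX _ (hp _)]
    rw [integral_add heint hfint, add_eq_left]
    exact integral_deriv_eq_zero_of_hasCompactSupport hflux hfsupp
  rw [hsource]
  exact hasDerivAt_integral_pderivT h.contDiffOn_density ht htT hK heK

end IsBalanceLaw

/-- A `C¹` weight which is positive in the backward cone `A + c t < x < B - c t` and vanishes
outside it. -/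
noncomputable def coneWeight (c A B : ℝ) (p : ℝ × ℝ) : ℝ :=
  expNegInvGlue (p.2 - (A + c * p.1)) * expNegInvGlue (B - c * p.1 - p.2)

section ConeWeight

variable {c A B t x : ℝ}

lemma contDiff_coneWeight : ContDiff ℝ 1 (coneWeight c A B) := by
  have h : ContDiff ℝ 1 expNegInvGlue := expNegInvGlue.contDiff (n := 1)
  exact (h.comp (by fun_prop)).mul (h.comp (by fun_prop))

lemma coneWeight_nonneg (p : ℝ × ℝ) : 0 ≤ coneWeight c A B p :=
  mul_nonneg (expNegInvGlue.nonneg _) (expNegInvGlue.nonneg _)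

lemma coneWeight_eq_zero (hx : x ∉ Ioo (A + c * t) (B - c * t)) :
    coneWeight c A B (t, x) = 0 := by
  rcases not_and_or.1 hx with h | h
  · exact mul_eq_zero_of_left (expNegInvGlue.zero_of_nonpos (by simpa using h)) _
  · exact mul_eq_zero_of_right _ (expNegInvGlue.zero_of_nonpos (by simpa using h))

lemma coneWeight_pos (hx : x ∈ Ioo (A + c * t) (B - c * t)) : 0 < coneWeight c A B (t, x) :=
  mul_pos (expNegInvGlue.pos_of_pos (sub_pos.2 hx.1)) (expNegInvGlue.pos_of_pos (sub_pos.2 hx.2))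

lemma mul_abs_pderivX_coneWeight_le {T : EReal} (hc : 0 ≤ c)
    (hp : (t, x) ∈ interior (timeStrip T)) :
    c * |pderivX (coneWeight c A B) (t, x)| ≤ -pderivT T (coneWeight c A B) (t, x) := by
  have hglue : ∀ y, HasDerivAt expNegInvGlue (deriv expNegInvGlue y) y := fun y =>
    ((expNegInvGlue.contDiff (n := 1)).differentiable one_ne_zero y).hasDerivAt
  set yl := x - (A + c * t)
  set yr := B - c * t - x
  have hpx : pderivX (coneWeight c A B) (t, x) =
      deriv expNegInvGlue yl * expNegInvGlue yr - expNegInvGlue yl * deriv expNegInvGlue yr := by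
    have hl : HasDerivAt (fun y => y - (A + c * t)) 1 x := (hasDerivAt_id x).sub_const _
    have hr : HasDerivAt (fun y => B - c * t - y) (-1) x := (hasDerivAt_id x).const_sub _
    have h := ((hglue yl).comp x hl).mul ((hglue yr).comp x hr)
    refine h.deriv.trans ?_
    simp only [Function.comp_apply]
    ring
  have hpt : pderivT T (coneWeight c A B) (t, x) = -c *
      (deriv expNegInvGlue yl * expNegInvGlue yr + expNegInvGlue yl * deriv expNegInvGlue yr) := by
    have hct : HasDerivAt (fun s => c * s) c t := by simpa using (hasDerivAt_id t).const_mul c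
    have hl : HasDerivAt (fun s => x - (A + c * s)) (-c) t := (hct.const_add A).const_sub x
    have hr : HasDerivAt (fun s => B - c * s - x) (-c) t := (hct.const_sub B).sub_const x
    have h := ((hglue yl).comp t hl).mul ((hglue yr).comp t hr)
    rw [pderivT_eq_deriv hp]
    refine h.deriv.trans ?_
    simp only [Function.comp_apply]
    ring
  have hleft : 0 ≤ deriv expNegInvGlue yl * expNegInvGlue yr :=
    mul_nonneg expNegInvGlue.monotone.deriv_nonneg (expNegInvGlue.nonneg _)
  have hright : 0 ≤ expNegInvGlue yl * deriv expNegInvGlue yr :=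
    mul_nonneg (expNegInvGlue.nonneg _) expNegInvGlue.monotone.deriv_nonneg
  rw [hpx, hpt, neg_mul, neg_neg]
  exact mul_le_mul_of_nonneg_left (abs_le.2 ⟨by linarith, by linarith⟩) hc

lemma coneWeight_source_nonpos {T : EReal} {e f g : ℝ} (hc : 0 ≤ c)
    (hp : (t, x) ∈ interior (timeStrip T))
    (hcone : x ∈ Ioo (A + c * t) (B - c * t) → 0 ≤ e ∧ g ≤ 0 ∧ |f| ≤ c * e) :
    coneWeight c A B (t, x) * g + (pderivT T (coneWeight c A B) (t, x) * e
      + pderivX (coneWeight c A B) (t, x) * f) ≤ 0 := by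
  by_cases hx : x ∈ Ioo (A + c * t) (B - c * t)
  · obtain ⟨he, hg, hf⟩ := hcone hx
    have hsource := mul_nonpos_of_nonneg_of_nonpos (coneWeight_nonneg (c := c) (A := A) (B := B)
      (t, x)) hg
    have hloss := mul_le_mul_of_nonneg_right (mul_abs_pderivX_coneWeight_le (A := A) (B := B)
      hc hp) he
    have hflux : pderivX (coneWeight c A B) (t, x) * f
        ≤ |pderivX (coneWeight c A B) (t, x)| * (c * e) :=
      (le_abs_self _).trans ((abs_mul _ _).trans_le
        (mul_le_mul_of_nonneg_left hf (abs_nonneg _)))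
    linarith
  · have hmin : ∀ q, coneWeight c A B (t, x) ≤ coneWeight c A B q := fun q =>
      (coneWeight_eq_zero hx).trans_le (coneWeight_nonneg q)
    have hpx : pderivX (coneWeight c A B) (t, x) = 0 :=
      IsLocalMin.deriv_eq_zero (Eventually.of_forall fun y => hmin (t, y))
    have hpt : pderivT T (coneWeight c A B) (t, x) = 0 :=
      (pderivT_eq_deriv hp).trans
        (IsLocalMin.deriv_eq_zero (Eventually.of_forall fun s => hmin (s, x)))
    simp [coneWeight_eq_zero hx, hpx, hpt]

end ConeWeight

namespace IsBalanceLaw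

variable {T : EReal} {e f g : ℝ × ℝ → ℝ} {c A B t₀ t₁ : ℝ}

lemma antitoneOn_integral_coneWeight (h : IsBalanceLaw T e f g) (hc : 0 ≤ c) (ht₀ : 0 ≤ t₀)
    (ht₁ : (t₁ : EReal) < T)
    (hcone : ∀ t ∈ Icc t₀ t₁, ∀ x ∈ Ioo (A + c * t) (B - c * t),
      0 ≤ e (t, x) ∧ g (t, x) ≤ 0 ∧ |f (t, x)| ≤ c * e (t, x)) :
    AntitoneOn (fun t => ∫ x, coneWeight c A B (t, x) * e (t, x)) (Icc t₀ t₁) := by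
  have hw := h.mul_weight (contDiff_coneWeight (c := c) (A := A) (B := B))
  have hout : ∀ t, 0 ≤ t → ∀ x ∉ Icc A B, coneWeight c A B (t, x) = 0 := fun t ht x hx => by
    have hct : 0 ≤ c * t := mul_nonneg hc ht
    exact coneWeight_eq_zero fun hx' => hx ⟨by linarith [hx'.1], by linarith [hx'.2]⟩
  have htime : ∀ t ∈ Icc t₀ t₁, 0 ≤ t ∧ (t : EReal) < T := fun t ht =>
    ⟨ht₀.trans ht.1, (EReal.coe_le_coe_iff.2 ht.2).trans_lt ht₁⟩
  refine antitoneOn_of_hasDerivWithinAt_nonpos (convex_Icc t₀ t₁)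
    (f' := fun t => ∫ x, (coneWeight c A B (t, x) * g (t, x)
      + (pderivT T (coneWeight c A B) (t, x) * e (t, x)
        + pderivX (coneWeight c A B) (t, x) * f (t, x))))
    (continuousOn_integral_slice (K := Icc A B) hw.contDiffOn_density.continuousOn htime
      isCompact_Icc fun t ht x hx => by simp [hout t (htime t ht).1 x hx]) ?_ ?_
  all_goals
    intro t ht
    rw [interior_Icc] at ht
    have hpos : 0 < t := ht₀.trans_lt ht.1
    have hlt := (htime t (Ioo_subset_Icc_self ht)).2
  · refine (hw.hasDerivAt_integral (K := Icc A B) hpos hlt isCompact_Icc ?_ ?_).hasDerivWithinAt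
    · filter_upwards [lt_mem_nhds hpos] with s hs x hx
      simp [hout s hs.le x hx]
    · intro x hx
      simp [hout t hpos.le x hx]
  · exact integral_nonpos fun x => coneWeight_source_nonpos hc (mem_interior_timeStrip hpos hlt)
      (hcone t (Ioo_subset_Icc_self ht) x)

lemma eq_zero_of_mem_cone (h : IsBalanceLaw T e f g) (hc : 0 ≤ c) (ht₀ : 0 ≤ t₀)
    (ht₁ : (t₁ : EReal) < T)
    (hcone : ∀ t ∈ Icc t₀ t₁, ∀ x ∈ Ioo (A + c * t) (B - c * t),
      0 ≤ e (t, x) ∧ g (t, x) ≤ 0 ∧ |f (t, x)| ≤ c * e (t, x))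
    (hinit : ∀ x ∈ Ioo (A + c * t₀) (B - c * t₀), e (t₀, x) = 0)
    {t x : ℝ} (ht : t ∈ Icc t₀ t₁) (hx : x ∈ Ioo (A + c * t) (B - c * t)) : e (t, x) = 0 := by
  have hwe : ContinuousOn (fun p => coneWeight c A B p * e p) (timeStrip T) :=
    contDiff_coneWeight.continuous.continuousOn.mul h.contDiffOn_density.continuousOn
  have hinit' : ∫ y, coneWeight c A B (t₀, y) * e (t₀, y) = 0 := by
    refine integral_eq_zero_of_ae (Eventually.of_forall fun y => ?_)
    by_cases hy : y ∈ Ioo (A + c * t₀) (B - c * t₀)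
    · simp [hinit y hy]
    · simp [coneWeight_eq_zero hy]
  have hle : ∫ y, coneWeight c A B (t, y) * e (t, y) ≤ 0 :=
    hinit' ▸ h.antitoneOn_integral_coneWeight hc ht₀ ht₁ hcone
      (left_mem_Icc.2 (ht.1.trans ht.2)) ht ht.1
  by_contra hne
  refine hle.not_gt (Continuous.integral_pos_of_hasCompactSupport_nonneg_nonzero (x := x)
    (continuous_slice hwe fun y => ⟨ht₀.trans ht.1, (EReal.coe_le_coe_iff.2 ht.2).trans_lt ht₁⟩)
    (HasCompactSupport.intro (K := Icc (A + c * t) (B - c * t)) isCompact_Icc fun y hy => ?_)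
    (fun y => ?_) (mul_ne_zero (coneWeight_pos hx).ne' hne))
  · simp [coneWeight_eq_zero fun hy' => hy (Ioo_subset_Icc_self hy')]
  · by_cases hy : y ∈ Ioo (A + c * t) (B - c * t)
    · exact mul_nonneg (coneWeight_nonneg _) (hcone t ht y hy).1
    · simp [coneWeight_eq_zero hy]

end IsBalanceLaw

/-! ### Energy near the reference state -/

/-- The internal energy of the gas, relative to the reference density `1`. -/
noncomputable def internalEnergy (γ r : ℝ) : ℝ := (r ^ γ - 1 - γ * (r - 1)) / (γ - 1)

/-- The energy density of the state `(r, v, s)`, relative to the reference state `(1, 0, 0)`. -/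
noncomputable def energyDensity (γ τ r v s : ℝ) : ℝ :=
  r * v ^ 2 / 2 + internalEnergy γ r + τ * r * s ^ 2 / 2

/-- The flux of `energyDensity`. -/
noncomputable def energyFlux (γ τ r v s : ℝ) : ℝ :=
  v * (energyDensity γ τ r v s + (r ^ γ - 1) - s)

/-- The quadratic part of `energyDensity` at the reference state, `a` being the density excess:
the energy density of the linearised system. -/
noncomputable def acousticEnergy (γ τ a v s : ℝ) : ℝ := (v ^ 2 + γ * a ^ 2 + τ * s ^ 2) / 2

section StateEnergy

variable {γ τ r v s : ℝ}

lemma internalEnergy_nonneg (hγ : 1 < γ) (hr : 0 < r) : 0 ≤ internalEnergy γ r := by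
  have hbernoulli := one_add_mul_self_le_rpow_one_add (s := r - 1) (by linarith) hγ.le
  rw [add_sub_cancel] at hbernoulli
  exact div_nonneg (by linarith) (by linarith)

lemma internalEnergy_pos (hγ : 1 < γ) (hr : 0 < r) (hne : r ≠ 1) : 0 < internalEnergy γ r := by
  have hbernoulli :=
    one_add_mul_self_lt_rpow_one_add (s := r - 1) (by linarith) (sub_ne_zero.2 hne) hγ
  rw [add_sub_cancel] at hbernoulli
  exact div_pos (by linarith) (by linarith)

lemma energyDensity_nonneg (hγ : 1 < γ) (hτ : 0 < τ) (hr : 0 < r) :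
    0 ≤ energyDensity γ τ r v s := by
  have hG := internalEnergy_nonneg hγ hr
  unfold energyDensity
  positivity

lemma energyDensity_ref : energyDensity γ τ 1 0 0 = 0 := by simp [energyDensity, internalEnergy]

lemma eq_ref_of_energyDensity_eq_zero (hγ : 1 < γ) (hτ : 0 < τ) (hr : 0 < r)
    (h : energyDensity γ τ r v s = 0) : r = 1 ∧ v = 0 ∧ s = 0 := by
  have hG := internalEnergy_nonneg hγ hr
  have hv : 0 ≤ r * v ^ 2 / 2 := by positivity
  have hs : 0 ≤ τ * r * s ^ 2 / 2 := by positivity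
  unfold energyDensity at h
  refine ⟨by_contra fun hne => ?_, ?_, ?_⟩
  · linarith [internalEnergy_pos hγ hr hne]
  · simpa [hr.ne'] using (by linarith : r * v ^ 2 / 2 = 0)
  · simpa [hr.ne', hτ.ne'] using (by linarith : τ * r * s ^ 2 / 2 = 0)

lemma hasDerivAt_internalEnergy (hr : r ≠ 0) :
    HasDerivAt (internalEnergy γ) (γ * (r ^ (γ - 1) - 1) / (γ - 1)) r := by
  refine ((((Real.hasDerivAt_rpow_const (Or.inl hr)).sub_const 1).sub
    (((hasDerivAt_id r).sub_const 1).const_mul γ)).div_const (γ - 1)).congr_deriv ?_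
  ring

lemma hasDerivAt_energyDensity {r v s : ℝ → ℝ} {r' v' s' z : ℝ} (hr : HasDerivAt r r' z)
    (hv : HasDerivAt v v' z) (hs : HasDerivAt s s' z) (hz : r z ≠ 0) :
    HasDerivAt (fun y => energyDensity γ τ (r y) (v y) (s y))
      (r' * v z ^ 2 / 2 + r z * v z * v' + γ * (r z ^ (γ - 1) - 1) / (γ - 1) * r'
        + τ * (r' * s z ^ 2 / 2 + r z * s z * s')) z := by
  refine ((((hr.mul (hv.pow 2)).div_const 2).add ((hasDerivAt_internalEnergy hz).comp z hr)).add
    (((hr.const_mul τ).mul (hs.pow 2)).div_const 2)).congr_deriv ?_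
  simp only [Nat.cast_ofNat, Pi.pow_apply]
  ring

lemma eventually_mul_sq_le_internalEnergy {k : ℝ} (hγ : 1 < γ) (hk : k < γ / 2) :
    ∀ᶠ r in 𝓝 1, k * (r - 1) ^ 2 ≤ internalEnergy γ r := by
  set φ : ℝ → ℝ := fun r => internalEnergy γ r - k * (r - 1) ^ 2
  set φ' : ℝ → ℝ := fun r => γ * (r ^ (γ - 1) - 1) / (γ - 1) - 2 * k * (r - 1)
  have hφ : ∀ r, 0 < r → HasDerivAt φ (φ' r) r := fun r hr =>
    ((hasDerivAt_internalEnergy hr.ne').sub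
      ((((hasDerivAt_id r).sub_const 1).pow 2).const_mul k)).congr_deriv
        (by simp only [φ', Nat.cast_ofNat, id]; ring)
  have hφ' : HasDerivAt φ' (γ - 2 * k) 1 := by
    refine (((((Real.hasDerivAt_rpow_const (p := γ - 1) (Or.inl one_ne_zero)).sub_const 1).const_mul
      γ).div_const (γ - 1)).sub (((hasDerivAt_id (1 : ℝ)).sub_const 1).const_mul
        (2 * k))).congr_deriv ?_
    have hγ1 : γ - 1 ≠ 0 := by linarith
    rw [Real.one_rpow]
    field_simp
  have hderiv : deriv φ =ᶠ[𝓝 1] φ' :=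
    (lt_mem_nhds one_pos).mono fun r hr => (hφ r hr).deriv
  have hmin : IsLocalMin φ 1 := by
    refine isLocalMin_of_deriv_deriv_pos ?_ ?_ (hφ 1 one_pos).continuousAt
    · rw [hderiv.deriv_eq, hφ'.deriv]; linarith
    · rw [(hφ 1 one_pos).deriv]; simp [φ']
  filter_upwards [hmin] with r hr
  have hφ1 : φ 1 = 0 := by simp [φ, internalEnergy]
  exact sub_nonneg.1 (hφ1 ▸ hr)

lemma eventually_abs_rpow_sub_le {ε : ℝ} (hε : 0 < ε) :
    ∀ᶠ r in 𝓝 (1 : ℝ), |r ^ γ - 1 - γ * (r - 1)| ≤ ε * |r - 1| := by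
  have hderiv : HasDerivAt (fun r : ℝ => r ^ γ) γ 1 := by
    simpa using Real.hasDerivAt_rpow_const (x := 1) (p := γ) (Or.inl one_ne_zero)
  filter_upwards [hderiv.isLittleO.def hε] with r hr
  simpa only [Real.one_rpow, smul_eq_mul, Real.norm_eq_abs, mul_comm (r - 1)] using hr

/-- The constant is the propagation speed `√(γ + 1 / τ)` of the linearised system. -/
lemma abs_acousticFlux_le {a c : ℝ} (hγ : 0 < γ) (hτ : 0 < τ) (hc : 0 < c)
    (hcσ : γ + 1 / τ ≤ c ^ 2) : |v * (γ * a - s)| ≤ c * acousticEnergy γ τ a v s := by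
  have hcauchy : (γ * a - s) ^ 2 ≤ (γ + 1 / τ) * (γ * a ^ 2 + τ * s ^ 2) := by
    have hdefect : (γ + 1 / τ) * (γ * a ^ 2 + τ * s ^ 2) - (γ * a - s) ^ 2
        = γ * (τ * s + a) ^ 2 / τ := by field_simp; ring
    have : 0 ≤ γ * (τ * s + a) ^ 2 / τ := by positivity
    linarith
  have hsq : (γ * a - s) ^ 2 ≤ c ^ 2 * (γ * a ^ 2 + τ * s ^ 2) :=
    hcauchy.trans (mul_le_mul_of_nonneg_right hcσ (by positivity))
  have hyoung : 2 * (c * |v|) * |γ * a - s| ≤ (c * |v|) ^ 2 + |γ * a - s| ^ 2 :=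
    two_mul_le_add_sq _ _
  rw [mul_pow, sq_abs, sq_abs] at hyoung
  rw [abs_mul, ← mul_le_mul_iff_of_pos_left hc, acousticEnergy]
  linarith

lemma acousticEnergy_le_energyDensity {ε : ℝ} (hτ : 0 < τ) (hr : 1 - ε ≤ r)
    (hG : (1 - ε) * (γ / 2) * (r - 1) ^ 2 ≤ internalEnergy γ r) :
    (1 - ε) * acousticEnergy γ τ (r - 1) v s ≤ energyDensity γ τ r v s := by
  have hv := mul_le_mul_of_nonneg_right hr (by positivity : 0 ≤ v ^ 2 / 2)
  have hs := mul_le_mul_of_nonneg_right hr (by positivity : 0 ≤ τ * s ^ 2 / 2)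
  unfold acousticEnergy energyDensity
  linarith

lemma abs_energyFlux_le {ε : ℝ} (hγ : 1 < γ) (hτ : 0 < τ) (hr : 0 < r) (hε : 0 ≤ ε)
    (hv : |v| ≤ ε) (hp : |r ^ γ - 1 - γ * (r - 1)| ≤ ε * |r - 1|) :
    |energyFlux γ τ r v s| ≤ ε * energyDensity γ τ r v s + |v * (γ * (r - 1) - s)|
      + ε * acousticEnergy γ τ (r - 1) v s := by
  have hE := energyDensity_nonneg (v := v) (s := s) hγ hτ hr
  have hsplit : energyFlux γ τ r v s = v * energyDensity γ τ r v s + v * (γ * (r - 1) - s)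
      + v * (r ^ γ - 1 - γ * (r - 1)) := by unfold energyFlux; ring
  have hcubic : |v * energyDensity γ τ r v s| ≤ ε * energyDensity γ τ r v s := by
    rw [abs_mul, abs_of_nonneg hE]
    exact mul_le_mul_of_nonneg_right hv hE
  have hyoung : |v| * |r - 1| ≤ acousticEnergy γ τ (r - 1) v s := by
    have h := two_mul_le_add_sq |v| |r - 1|
    rw [sq_abs, sq_abs] at h
    have hγa : (r - 1) ^ 2 ≤ γ * (r - 1) ^ 2 := le_mul_of_one_le_left (sq_nonneg _) hγ.le
    have hs : 0 ≤ τ * s ^ 2 := by positivity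
    unfold acousticEnergy
    linarith
  have hpressure : |v * (r ^ γ - 1 - γ * (r - 1))| ≤ ε * acousticEnergy γ τ (r - 1) v s :=
    calc |v * (r ^ γ - 1 - γ * (r - 1))| ≤ |v| * (ε * |r - 1|) := by
          rw [abs_mul]; exact mul_le_mul_of_nonneg_left hp (abs_nonneg v)
      _ = ε * (|v| * |r - 1|) := by ring
      _ ≤ ε * acousticEnergy γ τ (r - 1) v s := mul_le_mul_of_nonneg_left hyoung hε
  rw [hsplit]
  exact (abs_add_three _ _ _).trans (by linarith)

lemma eventually_abs_energyFlux_le {σ c : ℝ} (hγ : 1 < γ) (hτ : 0 < τ) (hσ : 0 < σ)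
    (hσ2 : γ + 1 / τ ≤ σ ^ 2) (hc : σ < c) :
    ∀ᶠ U : ℝ × ℝ × ℝ in 𝓝 (1, 0, 0),
      |energyFlux γ τ U.1 U.2.1 U.2.2| ≤ c * energyDensity γ τ U.1 U.2.1 U.2.2 := by
  set ε := (c - σ) / (2 + c)
  have hε : 0 < ε := div_pos (by linarith) (by linarith)
  have hεc : ε * (2 + c) = c - σ := div_mul_cancel₀ _ (by linarith)
  have hε_lt : ε < c := by nlinarith
  have hdensity : ∀ᶠ r in 𝓝 (1 : ℝ), 0 < r ∧ 1 - ε ≤ r ∧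
      (1 - ε) * (γ / 2) * (r - 1) ^ 2 ≤ internalEnergy γ r ∧
      |r ^ γ - 1 - γ * (r - 1)| ≤ ε * |r - 1| :=
    (lt_mem_nhds one_pos).and ((le_mem_nhds (by linarith)).and
      ((eventually_mul_sq_le_internalEnergy hγ (by nlinarith)).and
        (eventually_abs_rpow_sub_le hε)))
  have hvelocity : ∀ᶠ v in 𝓝 (0 : ℝ), |v| ≤ ε :=
    (continuous_abs.continuousAt.eventually_lt continuousAt_const (by simpa using hε)).mono
      fun v hv => hv.le
  filter_upwards [continuousAt_fst.eventually hdensity,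
    (continuousAt_fst.comp continuousAt_snd).eventually hvelocity]
    with ⟨r, v, s⟩ ⟨hr, hr1, hG, hp⟩ hv
  have hflux := abs_energyFlux_le (r := r) (v := v) (s := s) hγ hτ hr hε.le hv hp
  have hlin := abs_acousticFlux_le (v := v) (s := s) (a := r - 1) (by linarith) hτ hσ hσ2
  have hE := acousticEnergy_le_energyDensity (r := r) (v := v) (s := s) hτ hr1 hG
  have hE0 : 0 ≤ acousticEnergy γ τ (r - 1) v s := by unfold acousticEnergy; positivity
  have hspeed : σ + ε ≤ (c - ε) * (1 - ε) := by nlinarith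
  have h1 := mul_le_mul_of_nonneg_right hspeed hE0
  have h2 := mul_le_mul_of_nonneg_left hE (sub_nonneg.2 hε_lt.le)
  change |energyFlux γ τ r v s| ≤ c * energyDensity γ τ r v s
  linarith

end StateEnergy

/-- `(ρ, u, S)` is a classical solution of the relaxation system with pressure `ρ ^ γ` on
`[0, T) × ℝ`. -/
structure IsClassicalSolution (γ τ : ℝ) (T : EReal) (ρ u S : ℝ × ℝ → ℝ) : Prop where
  contDiffOn_density : ContDiffOn ℝ 1 ρ (timeStrip T)
  contDiffOn_velocity : ContDiffOn ℝ 1 u (timeStrip T)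
  contDiffOn_stress : ContDiffOn ℝ 1 S (timeStrip T)
  density_pos : ∀ p ∈ timeStrip T, 0 < ρ p
  mass : ∀ p ∈ timeStrip T, pderivT T ρ p + pderivX (fun q => ρ q * u q) p = 0
  momentum : ∀ p ∈ timeStrip T,
    ρ p * pderivT T u p + ρ p * u p * pderivX u p + pderivX (fun q => ρ q ^ γ) p = pderivX S p
  relaxation : ∀ p ∈ timeStrip T,
    τ * ρ p * (pderivT T S p + u p * pderivX S p) - pderivX u p = -S p

namespace IsClassicalSolution

variable {γ τ : ℝ} {T : EReal} {ρ u S : ℝ × ℝ → ℝ}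

lemma contDiffOn_pressure (h : IsClassicalSolution γ τ T ρ u S) :
    ContDiffOn ℝ 1 (fun p => ρ p ^ γ) (timeStrip T) :=
  h.contDiffOn_density.rpow_const_of_ne fun p hp => (h.density_pos p hp).ne'

lemma contDiffOn_energyDensity (h : IsClassicalSolution γ τ T ρ u S) :
    ContDiffOn ℝ 1 (fun p => energyDensity γ τ (ρ p) (u p) (S p)) (timeStrip T) := by
  have hρ := h.contDiffOn_density
  have hu := h.contDiffOn_velocity
  have hS := h.contDiffOn_stress
  exact ((((hρ.mul (hu.pow 2)).div_const 2).add (((h.contDiffOn_pressure.sub contDiffOn_const).sub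
    (contDiffOn_const.mul (hρ.sub contDiffOn_const))).div_const _)).add
      (((contDiffOn_const.mul hρ).mul (hS.pow 2)).div_const 2))

lemma contDiffOn_energyFlux (h : IsClassicalSolution γ τ T ρ u S) :
    ContDiffOn ℝ 1 (fun p => energyFlux γ τ (ρ p) (u p) (S p)) (timeStrip T) :=
  h.contDiffOn_velocity.mul ((h.contDiffOn_energyDensity.add
    (h.contDiffOn_pressure.sub contDiffOn_const)).sub h.contDiffOn_stress)

lemma pderivX_mass_flux (h : IsClassicalSolution γ τ T ρ u S) {p : ℝ × ℝ}
    (hp : p ∈ interior (timeStrip T)) :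
    pderivX (fun q => ρ q * u q) p = pderivX ρ p * u p + ρ p * pderivX u p :=
  ((hasDerivAt_pderivX (differentiableAt_of_mem_interior_timeStrip h.contDiffOn_density hp)).mul
    (hasDerivAt_pderivX
      (differentiableAt_of_mem_interior_timeStrip h.contDiffOn_velocity hp))).deriv

lemma pderivX_pressure (h : IsClassicalSolution γ τ T ρ u S) {p : ℝ × ℝ}
    (hp : p ∈ interior (timeStrip T)) :
    pderivX (fun q => ρ q ^ γ) p = γ * ρ p ^ (γ - 1) * pderivX ρ p := by
  have hρ := hasDerivAt_pderivX
    (differentiableAt_of_mem_interior_timeStrip h.contDiffOn_density hp)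
  refine ((hρ.rpow_const (p := γ)
    (Or.inl (h.density_pos p (interior_subset hp)).ne')).deriv).trans ?_
  ring

lemma isBalanceLaw_mass (h : IsClassicalSolution γ τ T ρ u S) :
    IsBalanceLaw T (fun p => ρ p - 1) (fun p => ρ p * u p) (fun _ => 0) where
  contDiffOn_density := h.contDiffOn_density.sub contDiffOn_const
  contDiffOn_flux := h.contDiffOn_density.mul h.contDiffOn_velocity
  pderivT_add_pderivX := by
    rintro ⟨t, x⟩ hp
    rw [← h.mass _ (interior_subset hp), pderivT_eq_deriv hp, pderivT_eq_deriv hp, deriv_sub_const]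

lemma isBalanceLaw_momentum (h : IsClassicalSolution γ τ T ρ u S) :
    IsBalanceLaw T (fun p => ρ p * u p) (fun p => ρ p * u p ^ 2 + ρ p ^ γ - 1 - S p)
      (fun _ => 0) where
  contDiffOn_density := h.contDiffOn_density.mul h.contDiffOn_velocity
  contDiffOn_flux := ((((h.contDiffOn_density.mul (h.contDiffOn_velocity.pow 2)).add
    h.contDiffOn_pressure).sub contDiffOn_const).sub h.contDiffOn_stress)
  pderivT_add_pderivX := by
    rintro ⟨t, x⟩ hp
    have hρ := differentiableAt_of_mem_interior_timeStrip h.contDiffOn_density hp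
    have hu := differentiableAt_of_mem_interior_timeStrip h.contDiffOn_velocity hp
    have hS := differentiableAt_of_mem_interior_timeStrip h.contDiffOn_stress hp
    have hP := differentiableAt_of_mem_interior_timeStrip h.contDiffOn_pressure hp
    have htime : pderivT T (fun p => ρ p * u p) (t, x)
        = pderivT T ρ (t, x) * u (t, x) + ρ (t, x) * pderivT T u (t, x) := by
      rw [pderivT_eq_deriv hp]
      exact ((hasDerivAt_pderivT hp hρ).mul (hasDerivAt_pderivT hp hu)).deriv
    have hspace := (((((hasDerivAt_pderivX hρ).mul ((hasDerivAt_pderivX hu).pow 2)).add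
      (hasDerivAt_pderivX hP)).sub_const 1).sub (hasDerivAt_pderivX hS)).deriv
    have hmass := h.mass _ (interior_subset hp)
    rw [h.pderivX_mass_flux hp] at hmass
    have hmom := h.momentum _ (interior_subset hp)
    rw [htime, pderivX]
    refine (congrArg _ hspace).trans ?_
    simp only [Nat.cast_ofNat, Pi.pow_apply]
    linear_combination u (t, x) * hmass + hmom

lemma isBalanceLaw_energy (h : IsClassicalSolution γ τ T ρ u S) (hγ : γ ≠ 1) :
    IsBalanceLaw T (fun p => energyDensity γ τ (ρ p) (u p) (S p))
      (fun p => energyFlux γ τ (ρ p) (u p) (S p)) (fun p => -S p ^ 2) where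
  contDiffOn_density := h.contDiffOn_energyDensity
  contDiffOn_flux := h.contDiffOn_energyFlux
  pderivT_add_pderivX := by
    rintro ⟨t, x⟩ hp
    have hρ := differentiableAt_of_mem_interior_timeStrip h.contDiffOn_density hp
    have hu := differentiableAt_of_mem_interior_timeStrip h.contDiffOn_velocity hp
    have hS := differentiableAt_of_mem_interior_timeStrip h.contDiffOn_stress hp
    have hP := differentiableAt_of_mem_interior_timeStrip h.contDiffOn_pressure hp
    have hpos := (h.density_pos _ (interior_subset hp)).ne'
    have htime := hasDerivAt_energyDensity (γ := γ) (τ := τ) (hasDerivAt_pderivT hp hρ)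
      (hasDerivAt_pderivT hp hu) (hasDerivAt_pderivT hp hS) hpos
    have hspace := (hasDerivAt_pderivX hu).mul
      (((hasDerivAt_energyDensity (γ := γ) (τ := τ) (hasDerivAt_pderivX hρ)
        (hasDerivAt_pderivX hu) (hasDerivAt_pderivX hS) hpos).add
          ((hasDerivAt_pderivX hP).sub_const 1)).sub (hasDerivAt_pderivX hS))
    have hmass := h.mass _ (interior_subset hp)
    rw [h.pderivX_mass_flux hp] at hmass
    have hmom := h.momentum _ (interior_subset hp)
    have hrelax := h.relaxation _ (interior_subset hp)
    have hpow : ρ (t, x) ^ γ = ρ (t, x) * ρ (t, x) ^ (γ - 1) := by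
      rw [Real.rpow_sub_one hpos]; field_simp
    have hinv : (γ - 1) * (γ - 1)⁻¹ = 1 := mul_inv_cancel₀ (sub_ne_zero.2 hγ)
    rw [pderivT_eq_deriv hp, htime.deriv, pderivX]
    refine (congrArg _ hspace.deriv).trans ?_
    simp only [h.pderivX_pressure hp] at hmom ⊢
    simp only [Pi.add_apply, Pi.sub_apply, energyDensity, internalEnergy, hpow]
    generalize ρ (t, x) ^ (γ - 1) = q at *
    -- The multipliers are the partial derivatives of the energy density, up to `ρ` and `τ ρ`.
    linear_combination (u (t, x) ^ 2 / 2 + γ * (q - 1) / (γ - 1) + τ * S (t, x) ^ 2 / 2) * hmass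
      + u (t, x) * hmom + S (t, x) * hrelax + pderivX u (t, x) * (1 - ρ (t, x) * q) * hinv

end IsClassicalSolution

/-! ### Finite propagation speed -/

/-- The solution takes the reference state `(1, 0, 0)` at `p`. -/
def AtRest (ρ u S : ℝ × ℝ → ℝ) (p : ℝ × ℝ) : Prop := ρ p = 1 ∧ u p = 0 ∧ S p = 0

/-- Outside the interval `[-(M + σ t), M + σ t]` the state at time `t` is the reference state: the
disturbance starts within `[-M, M]` and spreads with speed at most `σ`. -/
def HasPropagationSpeed (M σ : ℝ) (T : EReal) (ρ u S : ℝ × ℝ → ℝ) : Prop :=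
  ∀ p ∈ timeStrip T, M + σ * p.1 < |p.2| → AtRest ρ u S p

namespace IsClassicalSolution

variable {γ τ σ c A B t₀ t₁ : ℝ} {T : EReal} {ρ u S : ℝ × ℝ → ℝ}

lemma exists_abs_energyFlux_le (h : IsClassicalSolution γ τ T ρ u S) (hγ : 1 < γ) (hτ : 0 < τ)
    (hσ : 0 < σ) (hσ2 : γ + 1 / τ ≤ σ ^ 2) (hc : σ < c) (ht₁ : (t₁ : EReal) < T) :
    ∃ δ > 0, ∀ s ∈ Icc 0 t₁, ∀ t ∈ Icc 0 t₁, |t - s| < δ → ∀ x ∈ Icc A B, AtRest ρ u S (s, x) →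
      |energyFlux γ τ (ρ (t, x)) (u (t, x)) (S (t, x))|
        ≤ c * energyDensity γ τ (ρ (t, x)) (u (t, x)) (S (t, x)) := by
  have hsub : Icc 0 t₁ ×ˢ Icc A B ⊆ timeStrip T := fun p hp =>
    ⟨hp.1.1, (EReal.coe_le_coe_iff.2 hp.1.2).trans_lt ht₁⟩
  have hcont : ContinuousOn (fun p => (ρ p, u p, S p)) (timeStrip T) :=
    h.contDiffOn_density.continuousOn.prodMk
      (h.contDiffOn_velocity.continuousOn.prodMk h.contDiffOn_stress.continuousOn)
  obtain ⟨ε, hε, hflux⟩ :=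
    Metric.eventually_nhds_iff.1 (eventually_abs_energyFlux_le hγ hτ hσ hσ2 hc)
  obtain ⟨δ, hδ, hunif⟩ := Metric.uniformContinuousOn_iff.1
    ((isCompact_Icc.prod isCompact_Icc).uniformContinuousOn_of_continuous (hcont.mono hsub)) ε hε
  refine ⟨δ, hδ, fun s hs t ht hst x hx ⟨hρ, hu, hS⟩ => ?_⟩
  have hdist := hunif (t, x) ⟨ht, hx⟩ (s, x) ⟨hs, hx⟩ (by simpa [Prod.dist_eq, Real.dist_eq, hδ])
  rw [hρ, hu, hS] at hdist
  exact hflux hdist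

lemma atRest_cone_step (h : IsClassicalSolution γ τ T ρ u S) (hγ : 1 < γ) (hτ : 0 < τ)
    (hc : 0 ≤ c) (ht₀ : 0 ≤ t₀) (ht₁ : (t₁ : EReal) < T)
    (hflux : ∀ t ∈ Icc t₀ t₁, ∀ x ∈ Icc A B, AtRest ρ u S (t₀, x) →
      |energyFlux γ τ (ρ (t, x)) (u (t, x)) (S (t, x))|
        ≤ c * energyDensity γ τ (ρ (t, x)) (u (t, x)) (S (t, x)))
    (hrest : ∀ x ∈ Ioo (A + c * t₀) (B - c * t₀), AtRest ρ u S (t₀, x)) :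
    ∀ t ∈ Icc t₀ t₁, ∀ x ∈ Ioo (A + c * t) (B - c * t), AtRest ρ u S (t, x) := by
  have hpos : ∀ t ∈ Icc t₀ t₁, ∀ x, 0 < ρ (t, x) := fun t ht x => h.density_pos _
    ⟨ht₀.trans ht.1, (EReal.coe_le_coe_iff.2 ht.2).trans_lt ht₁⟩
  have hct₀ : 0 ≤ c * t₀ := mul_nonneg hc ht₀
  intro t ht x hx
  refine eq_ref_of_energyDensity_eq_zero hγ hτ (hpos t ht x)
    ((h.isBalanceLaw_energy hγ.ne').eq_zero_of_mem_cone hc ht₀ ht₁ (fun s hs y hy => ?_)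
      (fun y hy => ?_) ht hx)
  · have hmono : c * t₀ ≤ c * s := mul_le_mul_of_nonneg_left hs.1 hc
    exact ⟨energyDensity_nonneg hγ hτ (hpos s hs y), neg_nonpos.2 (sq_nonneg _),
      hflux s hs y ⟨by linarith [hy.1], by linarith [hy.2]⟩
        (hrest y ⟨by linarith [hy.1], by linarith [hy.2]⟩)⟩
  · obtain ⟨hρ, hu, hS⟩ := hrest y hy
    simp only [hρ, hu, hS, energyDensity_ref]

lemma atRest_of_mem_cone (h : IsClassicalSolution γ τ T ρ u S) (hγ : 1 < γ) (hτ : 0 < τ)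
    (hσ : 0 < σ) (hσ2 : γ + 1 / τ ≤ σ ^ 2) (hc : σ < c)
    (hrest : ∀ x ∈ Ioo A B, AtRest ρ u S (0, x)) {t x : ℝ} (ht : 0 ≤ t) (htT : (t : EReal) < T)
    (hx : x ∈ Ioo (A + c * t) (B - c * t)) : AtRest ρ u S (t, x) := by
  obtain ⟨δ, hδ, hflux⟩ :=
    h.exists_abs_energyFlux_le (A := A) (B := B) hγ hτ hσ hσ2 hc htT
  have hind : ∀ n : ℕ, ∀ s ∈ Icc 0 t, s ≤ n * (δ / 2) →
      ∀ y ∈ Ioo (A + c * s) (B - c * s), AtRest ρ u S (s, y) := by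
    intro n
    induction n with
    | zero =>
      intro s hs hsn y hy
      obtain rfl : s = 0 := le_antisymm (by simpa using hsn) hs.1
      exact hrest y (by simpa using hy)
    | succ n ih =>
      intro s hs hsn
      push_cast at hsn
      set s₀ := max 0 (s - δ / 2)
      have hs₀ : s₀ ∈ Icc 0 s := ⟨le_max_left _ _, max_le hs.1 (by linarith)⟩
      have hs₀t : s₀ ∈ Icc 0 t := ⟨hs₀.1, hs₀.2.trans hs.2⟩
      have hgap : s - δ / 2 ≤ s₀ := le_max_right _ _
      have hs₀n : s₀ ≤ n * (δ / 2) := max_le (by positivity) (by linarith)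
      refine h.atRest_cone_step hγ hτ (hσ.trans hc).le hs₀.1
        ((EReal.coe_le_coe_iff.2 hs.2).trans_lt htT) (fun r hr => hflux s₀ hs₀t r
          ⟨hs₀.1.trans hr.1, hr.2.trans hs.2⟩ ?_) (ih s₀ hs₀t hs₀n) s (right_mem_Icc.2 hs₀.2)
      rw [abs_of_nonneg (sub_nonneg.2 hr.1)]
      linarith [hr.2]
  obtain ⟨n, hn⟩ := exists_nat_ge (t / (δ / 2))
  exact hind n t ⟨ht, le_rfl⟩ ((div_le_iff₀ (by positivity)).1 hn) x hx

theorem hasPropagationSpeed {M : ℝ} (h : IsClassicalSolution γ τ T ρ u S) (hγ : 1 < γ)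
    (hτ : 0 < τ) (hσ : 0 < σ) (hσ2 : γ + 1 / τ ≤ σ ^ 2)
    (hrest : ∀ x, M ≤ |x| → AtRest ρ u S (0, x)) : HasPropagationSpeed M σ T ρ u S := by
  rintro ⟨t, x⟩ ⟨ht, htT⟩ hx
  dsimp only at ht htT hx
  obtain ⟨c, hcx, hc⟩ : ∃ c, M + c * t < |x| ∧ σ < c := by
    have hcont : ContinuousAt (fun c => M + c * t) σ := by fun_prop
    exact ((hcont.eventually_lt continuousAt_const hx).filter_mono nhdsWithin_le_nhds
      |>.and self_mem_nhdsWithin : ∀ᶠ c in 𝓝[>] σ, _).exists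
  have hct : 0 ≤ c * t := mul_nonneg (hσ.trans hc).le ht
  rcases abs_cases x with ⟨habs, -⟩ | ⟨habs, -⟩ <;> rw [habs] at hcx
  · exact h.atRest_of_mem_cone (A := M) (B := x + c * t + 1) hγ hτ hσ hσ2 hc
      (fun y hy => hrest y (hy.1.le.trans (le_abs_self y))) ht htT ⟨hcx, by linarith⟩
  · exact h.atRest_of_mem_cone (A := x - c * t - 1) (B := -M) hγ hτ hσ hσ2 hc
      (fun y hy => hrest y ((le_neg.2 hy.2.le).trans (neg_le_abs y))) ht htT
      ⟨by linarith, by linarith⟩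

end IsClassicalSolution

/-! ### Virial estimates -/

section Inequalities

lemma sub_lt_inv_of_riccati {a b : ℝ} {y y' Φ Φ' : ℝ → ℝ} (hab : a ≤ b)
    (hy : ContinuousOn y (Icc a b)) (hΦ : ContinuousOn Φ (Icc a b))
    (hy' : ∀ t ∈ Ioo a b, HasDerivAt y (y' t) t) (hΦ' : ∀ t ∈ Ioo a b, HasDerivAt Φ (Φ' t) t)
    (hpos : ∀ t ∈ Icc a b, 0 < y t) (hriccati : ∀ t ∈ Ioo a b, Φ' t * y t ^ 2 ≤ y' t) :
    Φ b - Φ a < (y a)⁻¹ := by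
  have hanti : AntitoneOn (fun t => (y t)⁻¹ + Φ t) (Icc a b) := by
    refine antitoneOn_of_hasDerivWithinAt_nonpos (convex_Icc a b)
      (f' := fun t => -y' t / y t ^ 2 + Φ' t)
      ((hy.inv₀ fun t ht => (hpos t ht).ne').add hΦ) ?_ ?_
    all_goals
      intro t ht
      rw [interior_Icc] at ht
      have hyt := hpos t (Ioo_subset_Icc_self ht)
    · exact (((hy' t ht).inv hyt.ne').add (hΦ' t ht)).hasDerivWithinAt
    · have := (le_div_iff₀ (pow_pos hyt 2)).2 (hriccati t ht)
      rw [neg_div]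
      linarith
  have hle := hanti (left_mem_Icc.2 hab) (right_mem_Icc.2 hab) hab
  have hyb := inv_pos.2 (hpos b (right_mem_Icc.2 hab))
  simp only at hle
  linarith

lemma sq_integral_mul_mul_le {α : Type*} [MeasurableSpace α] {μ : Measure α} {w f g : α → ℝ}
    (hw : ∀ a, 0 ≤ w a) (hff : Integrable (fun a => w a * f a ^ 2) μ)
    (hfg : Integrable (fun a => w a * (f a * g a)) μ)
    (hgg : Integrable (fun a => w a * g a ^ 2) μ) :
    (∫ a, w a * (f a * g a) ∂μ) ^ 2 ≤ (∫ a, w a * f a ^ 2 ∂μ) * ∫ a, w a * g a ^ 2 ∂μ := by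
  have hquad : ∀ t : ℝ, 0 ≤ (∫ a, w a * f a ^ 2 ∂μ) * (t * t)
      + 2 * (∫ a, w a * (f a * g a) ∂μ) * t + ∫ a, w a * g a ^ 2 ∂μ := fun t => by
    have hexpand : (∫ a, w a * (t * f a + g a) ^ 2 ∂μ) = (∫ a, w a * f a ^ 2 ∂μ) * (t * t)
        + 2 * (∫ a, w a * (f a * g a) ∂μ) * t + ∫ a, w a * g a ^ 2 ∂μ := by
      have hpoint : ∀ a, w a * (t * f a + g a) ^ 2
          = w a * f a ^ 2 * (t * t) + 2 * t * (w a * (f a * g a)) + w a * g a ^ 2 := fun a => by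
        ring
      simp_rw [hpoint]
      rw [integral_add ((hff.mul_const _).fun_add (hfg.const_mul _)) hgg,
        integral_add (hff.mul_const _) (hfg.const_mul _), integral_mul_const, integral_const_mul]
      ring
    rw [← hexpand]
    exact integral_nonneg fun a => mul_nonneg (hw a) (sq_nonneg _)
  have hdiscrim := discrim_le_zero hquad
  unfold discrim at hdiscrim
  linarith

end Inequalities

section Virial

variable {r v s : ℝ → ℝ} {X : ℝ}

lemma notMem_Icc_neg_iff {x : ℝ} : x ∉ Icc (-X) X ↔ X < |x| := by
  rw [mem_Icc, ← abs_le, not_le]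

lemma setIntegral_Icc_neg_of_eq_zero {φ : ℝ → ℝ} (hφ : ∀ x, X < |x| → φ x = 0) :
    ∫ x in Icc (-X) X, φ x = ∫ x, φ x :=
  setIntegral_eq_integral_of_forall_compl_eq_zero fun x hx => hφ x (notMem_Icc_neg_iff.1 hx)

lemma setIntegral_Icc_neg_const (hX : 0 ≤ X) (k : ℝ) : ∫ _ in Icc (-X) X, k = 2 * X * k := by
  rw [setIntegral_const, smul_eq_mul, Real.volume_real_Icc_of_le (by linarith)]
  ring

lemma integrable_of_eq_zero_of_lt_abs {φ : ℝ → ℝ} (hφ : Continuous φ)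
    (hout : ∀ x, X < |x| → φ x = 0) : Integrable φ :=
  hφ.integrable_of_hasCompactSupport (HasCompactSupport.intro (K := Icc (-X) X) isCompact_Icc
    fun x hx => hout x (notMem_Icc_neg_iff.1 hx))

lemma integral_le_mul_of_le {φ : ℝ → ℝ} {k : ℝ} (hφ : Continuous φ) (hX : 0 ≤ X)
    (hout : ∀ x, X < |x| → φ x = 0) (hle : ∀ x, φ x ≤ k) : ∫ x, φ x ≤ 2 * X * k := by
  rw [← setIntegral_Icc_neg_of_eq_zero hout, ← setIntegral_Icc_neg_const hX]
  exact setIntegral_mono (hφ.continuousOn.integrableOn_compact isCompact_Icc)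
    (continuous_const.continuousOn.integrableOn_compact isCompact_Icc) hle

lemma sq_integral_mul_momentum_le (hr : Continuous r) (hv : Continuous v) (hpos : ∀ x, 0 < r x)
    (hX : 0 ≤ X) (hrX : ∀ x, X < |x| → r x = 1) (hvX : ∀ x, X < |x| → v x = 0) :
    (∫ x, x * (r x * v x)) ^ 2 ≤ X ^ 2 * (2 * X + ∫ x, (r x - 1)) * ∫ x, r x * v x ^ 2 := by
  have hint : ∀ {φ : ℝ → ℝ}, Continuous φ → IntegrableOn φ (Icc (-X) X) := fun hφ =>
    hφ.continuousOn.integrableOn_compact isCompact_Icc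
  have hcauchy := sq_integral_mul_mul_le (μ := volume.restrict (Icc (-X) X)) (f := fun x => x)
    (fun x => (hpos x).le) (hint (by fun_prop)) (hint (hr.mul (continuous_id.mul hv)))
    (hint (by fun_prop))
  have hmoment : ∫ x in Icc (-X) X, r x * (x * v x) = ∫ x, x * (r x * v x) := by
    simp_rw [mul_left_comm (r _)]
    exact setIntegral_Icc_neg_of_eq_zero fun x hx => by simp [hvX x hx]
  have hkinetic : ∫ x in Icc (-X) X, r x * v x ^ 2 = ∫ x, r x * v x ^ 2 :=
    setIntegral_Icc_neg_of_eq_zero fun x hx => by simp [hvX x hx]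
  have hmass : ∫ x in Icc (-X) X, r x = 2 * X + ∫ x, (r x - 1) := by
    rw [← setIntegral_Icc_neg_of_eq_zero (X := X) fun x hx => sub_eq_zero.2 (hrX x hx),
      integral_sub (hint hr) (hint continuous_const), setIntegral_Icc_neg_const hX]
    ring
  have hinertia : ∫ x in Icc (-X) X, r x * x ^ 2 ≤ X ^ 2 * (2 * X + ∫ x, (r x - 1)) := by
    rw [← hmass, mul_comm, ← integral_mul_const]
    refine setIntegral_mono_on (hint (by fun_prop)) (hint (by fun_prop)) measurableSet_Icc
      fun x hx => mul_le_mul_of_nonneg_left (sq_le_sq' hx.1 hx.2) (hpos x).le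
  rw [hmoment, hkinetic] at hcauchy
  exact hcauchy.trans (mul_le_mul_of_nonneg_right hinertia
    (integral_nonneg fun x => mul_nonneg (hpos x).le (sq_nonneg _)))

lemma mul_integral_sub_one_le_integral_rpow_sub_one {γ : ℝ} (hγ : 1 ≤ γ) (hr : Continuous r)
    (hpos : ∀ x, 0 < r x) (hrX : ∀ x, X < |x| → r x = 1) :
    γ * ∫ x, (r x - 1) ≤ ∫ x, (r x ^ γ - 1) := by
  have hpow : Continuous fun x => r x ^ γ := hr.rpow_const fun x => Or.inl (hpos x).ne'
  rw [← integral_const_mul]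
  refine integral_mono
    (integrable_of_eq_zero_of_lt_abs (X := X) (by fun_prop) fun x hx => by simp [hrX x hx])
    (integrable_of_eq_zero_of_lt_abs (X := X) (by fun_prop) fun x hx => by simp [hrX x hx])
    fun x => ?_
  have hbernoulli := one_add_mul_self_le_rpow_one_add (s := r x - 1) (by linarith [hpos x]) hγ
  rw [add_sub_cancel] at hbernoulli
  simp only
  linarith

lemma integral_le_mul_add_integral_sq_div {θ : ℝ} (hs : Continuous s) (hX : 0 ≤ X) (hθ : 0 < θ)
    (hsX : ∀ x, X < |x| → s x = 0) :
    ∫ x, s x ≤ θ * X + (∫ x, s x ^ 2) / (2 * θ) := by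
  have hint : ∀ {φ : ℝ → ℝ}, Continuous φ → IntegrableOn φ (Icc (-X) X) := fun hφ =>
    hφ.continuousOn.integrableOn_compact isCompact_Icc
  have hyoung : ∀ x, s x ≤ θ / 2 + s x ^ 2 / (2 * θ) := fun x => by
    have hsq : θ / 2 + s x ^ 2 / (2 * θ) - s x = (s x - θ) ^ 2 / (2 * θ) := by field_simp; ring
    have : 0 ≤ (s x - θ) ^ 2 / (2 * θ) := by positivity
    linarith
  calc ∫ x, s x = ∫ x in Icc (-X) X, s x := (setIntegral_Icc_neg_of_eq_zero hsX).symm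
    _ ≤ ∫ x in Icc (-X) X, (θ / 2 + s x ^ 2 / (2 * θ)) :=
      setIntegral_mono (hint hs) (hint (by fun_prop)) hyoung
    _ = θ * X + (∫ x, s x ^ 2) / (2 * θ) := by
      rw [integral_add (hint continuous_const) (hint (by fun_prop)), setIntegral_Icc_neg_const hX,
        integral_div, setIntegral_Icc_neg_of_eq_zero fun x hx => by simp [hsX x hx]]
      ring

/-- The stress, which has no sign, is absorbed by Young's inequality with parameter `θ`. -/
lemma sq_moment_div_le_integral_momentumFlux {γ P θ : ℝ} (hγ : 1 ≤ γ) (hr : Continuous r)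
    (hv : Continuous v) (hs : Continuous s) (hpos : ∀ x, 0 < r x) (hX : 0 < X) (hθ : 0 < θ)
    (hrX : ∀ x, X < |x| → r x = 1) (hvX : ∀ x, X < |x| → v x = 0)
    (hsX : ∀ x, X < |x| → s x = 0) (hmass : 0 ≤ ∫ x, (r x - 1))
    (hP : 2 * X + ∫ x, (r x - 1) ≤ 2 * P * X) :
    (∫ x, x * (r x * v x)) ^ 2 / (2 * P * X ^ 3)
      ≤ (∫ x, (r x * v x ^ 2 + r x ^ γ - 1 - s x)) + (θ * X + (∫ x, s x ^ 2) / (2 * θ)) := by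
  have hpow : Continuous fun x => r x ^ γ := hr.rpow_const fun x => Or.inl (hpos x).ne'
  have : 0 < 2 * P * X := by linarith
  have hkinetic : (∫ x, x * (r x * v x)) ^ 2 / (2 * P * X ^ 3) ≤ ∫ x, r x * v x ^ 2 := by
    rw [div_le_iff₀ (by nlinarith [pow_pos hX 2] : 0 < 2 * P * X ^ 3)]
    have hJ : 0 ≤ ∫ x, r x * v x ^ 2 :=
      integral_nonneg fun x => mul_nonneg (hpos x).le (sq_nonneg _)
    calc (∫ x, x * (r x * v x)) ^ 2
        ≤ X ^ 2 * (2 * X + ∫ x, (r x - 1)) * ∫ x, r x * v x ^ 2 :=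
          sq_integral_mul_momentum_le hr hv hpos hX.le hrX hvX
      _ ≤ X ^ 2 * (2 * P * X) * ∫ x, r x * v x ^ 2 := by gcongr
      _ = (∫ x, r x * v x ^ 2) * (2 * P * X ^ 3) := by ring
  have hpressure : 0 ≤ ∫ x, (r x ^ γ - 1) := (by positivity : 0 ≤ γ * ∫ x, (r x - 1)).trans
    (mul_integral_sub_one_le_integral_rpow_sub_one hγ hr hpos hrX)
  have hstress := integral_le_mul_add_integral_sq_div hs hX.le hθ hsX
  have hsplit : ∫ x, (r x * v x ^ 2 + r x ^ γ - 1 - s x)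
      = (∫ x, r x * v x ^ 2) + (∫ x, (r x ^ γ - 1)) - ∫ x, s x := by
    have hintv := integrable_of_eq_zero_of_lt_abs (X := X) (φ := fun x => r x * v x ^ 2)
      (by fun_prop) fun x hx => by simp [hvX x hx]
    have hintp := integrable_of_eq_zero_of_lt_abs (X := X) (φ := fun x => r x ^ γ - 1)
      (by fun_prop) fun x hx => by simp [hrX x hx]
    rw [← integral_add hintv hintp, ← integral_sub (hintv.fun_add hintp)
      (integrable_of_eq_zero_of_lt_abs hs hsX)]
    simp only [add_sub_assoc]
  linarith

end Virial

section ExpandingSupport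

variable {T : EReal} {e f g : ℝ × ℝ → ℝ} {M σ t : ℝ}

lemma continuousOn_integral_of_expanding (he : ContinuousOn e (timeStrip T)) (htT : (t : EReal) < T)
    (hσ : 0 ≤ σ) (heX : ∀ p ∈ timeStrip T, M + σ * p.1 < |p.2| → e p = 0) :
    ContinuousOn (fun s => ∫ x, e (s, x)) (Icc 0 t) := by
  have hI : ∀ s ∈ Icc 0 t, 0 ≤ s ∧ (s : EReal) < T := fun s hs =>
    ⟨hs.1, (EReal.coe_le_coe_iff.2 hs.2).trans_lt htT⟩
  refine continuousOn_integral_slice he hI (K := Icc (-(M + σ * t)) (M + σ * t)) isCompact_Icc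
    fun s hs x hx => heX _ (hI s hs) ?_
  exact (add_le_add_right (mul_le_mul_of_nonneg_left hs.2 hσ) M).trans_lt
    (notMem_Icc_neg_iff.1 hx)

lemma IsBalanceLaw.hasDerivAt_integral_of_expanding (h : IsBalanceLaw T e f g) (ht : 0 < t)
    (htT : (t : EReal) < T) (hσ : 0 ≤ σ)
    (heX : ∀ p ∈ timeStrip T, M + σ * p.1 < |p.2| → e p = 0)
    (hfX : ∀ p ∈ timeStrip T, M + σ * p.1 < |p.2| → f p = 0) :
    HasDerivAt (fun s => ∫ x, e (s, x)) (∫ x, g (t, x)) t := by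
  obtain ⟨b, htb, hbT⟩ := EReal.lt_iff_exists_real_btwn.1 htT
  rw [EReal.coe_lt_coe_iff] at htb
  have hX : ∀ s ≤ b, ∀ x ∉ Icc (-(M + σ * b)) (M + σ * b), M + σ * s < |x| := fun s hs x hx =>
    (add_le_add_right (mul_le_mul_of_nonneg_left hs hσ) M).trans_lt (notMem_Icc_neg_iff.1 hx)
  refine h.hasDerivAt_integral ht htT (K := Icc (-(M + σ * b)) (M + σ * b)) isCompact_Icc ?_
    fun x hx => hfX _ ⟨ht.le, htT⟩ (hX t htb.le x hx)
  filter_upwards [Ioo_mem_nhds ht htb] with s hs x hx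
  exact heX _ ⟨hs.1.le, (EReal.coe_lt_coe_iff.2 hs.2).trans hbT⟩ (hX s hs.2.le x hx)

end ExpandingSupport

/-! ### Growth of the momentum moment -/

/-- The mass at time `t`, relative to the reference density `1`. -/
noncomputable def massExcess (ρ : ℝ × ℝ → ℝ) (t : ℝ) : ℝ := ∫ x, (ρ (t, x) - 1)

/-- The first moment of the momentum at time `t`, the functional whose growth is incompatible with
a bounded support. -/
noncomputable def momentumMoment (ρ u : ℝ × ℝ → ℝ) (t : ℝ) : ℝ := ∫ x, x * (ρ (t, x) * u (t, x))

/-- The total energy at time `t`, relative to the reference state. -/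
noncomputable def totalEnergy (γ τ : ℝ) (ρ u S : ℝ × ℝ → ℝ) (t : ℝ) : ℝ :=
  ∫ x, energyDensity γ τ (ρ (t, x)) (u (t, x)) (S (t, x))

/-- The momentum moment, corrected so that its derivative dominates the kinetic part of the
momentum flux: the stress is compensated, through Young's inequality with parameter `θ`, by the
primitive of `θ (M + σ t)` and by the dissipated energy. -/
noncomputable def correctedMoment (γ τ M σ θ : ℝ) (ρ u S : ℝ × ℝ → ℝ) (t : ℝ) : ℝ :=
  momentumMoment ρ u t + θ * (M * t + σ * t ^ 2 / 2)
    + (totalEnergy γ τ ρ u S 0 - totalEnergy γ τ ρ u S t) / (2 * θ)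

namespace IsClassicalSolution

variable {γ τ M σ θ P t : ℝ} {T : EReal} {ρ u S : ℝ × ℝ → ℝ}

lemma hasDerivAt_massExcess (h : IsClassicalSolution γ τ T ρ u S)
    (hrest : HasPropagationSpeed M σ T ρ u S) (hσ : 0 ≤ σ) (ht : 0 < t) (htT : (t : EReal) < T) :
    HasDerivAt (massExcess ρ) 0 t := by
  rw [← integral_zero ℝ ℝ]
  exact h.isBalanceLaw_mass.hasDerivAt_integral_of_expanding ht htT hσ
    (fun p hp hx => sub_eq_zero.2 (hrest p hp hx).1)
    (fun p hp hx => by rw [(hrest p hp hx).2.1, mul_zero])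

lemma massExcess_eq (h : IsClassicalSolution γ τ T ρ u S)
    (hrest : HasPropagationSpeed M σ T ρ u S) (hσ : 0 ≤ σ) (ht : 0 < t) (htT : (t : EReal) < T) :
    massExcess ρ t = massExcess ρ 0 := by
  have hcont : ContinuousOn (massExcess ρ) (Icc 0 t) :=
    continuousOn_integral_of_expanding h.isBalanceLaw_mass.contDiffOn_density.continuousOn htT hσ
      fun p hp hx => sub_eq_zero.2 (hrest p hp hx).1
  obtain ⟨s, -, hs⟩ := exists_hasDerivAt_eq_slope (massExcess ρ) (fun _ => 0) ht hcont
    fun s hs => h.hasDerivAt_massExcess hrest hσ hs.1 ((EReal.coe_lt_coe_iff.2 hs.2).trans htT)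
  rw [eq_comm, div_eq_zero_iff, sub_zero, sub_eq_zero] at hs
  exact hs.resolve_right ht.ne'

lemma isBalanceLaw_moment (h : IsClassicalSolution γ τ T ρ u S) :
    IsBalanceLaw T (fun p => p.2 * (ρ p * u p))
      (fun p => p.2 * (ρ p * u p ^ 2 + ρ p ^ γ - 1 - S p))
      (fun p => ρ p * u p ^ 2 + ρ p ^ γ - 1 - S p) := by
  convert h.isBalanceLaw_momentum.mul_weight contDiff_snd using 2 with p
  simp [pderivT, pderivX]

lemma hasDerivAt_momentumMoment (h : IsClassicalSolution γ τ T ρ u S)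
    (hrest : HasPropagationSpeed M σ T ρ u S) (hσ : 0 ≤ σ) (ht : 0 < t) (htT : (t : EReal) < T) :
    HasDerivAt (momentumMoment ρ u)
      (∫ x, (ρ (t, x) * u (t, x) ^ 2 + ρ (t, x) ^ γ - 1 - S (t, x))) t :=
  h.isBalanceLaw_moment.hasDerivAt_integral_of_expanding ht htT hσ
    (fun p hp hx => by simp [(hrest p hp hx).2.1])
    (fun p hp hx => by obtain ⟨hρ, hu, hS⟩ := hrest p hp hx; simp [hρ, hu, hS])

lemma energyDensity_eq_zero_of_lt_abs (hrest : HasPropagationSpeed M σ T ρ u S) :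
    ∀ p ∈ timeStrip T, M + σ * p.1 < |p.2| → energyDensity γ τ (ρ p) (u p) (S p) = 0 :=
  fun p hp hx => by
    obtain ⟨hρ, hu, hS⟩ := hrest p hp hx
    rw [hρ, hu, hS, energyDensity_ref]

lemma hasDerivAt_totalEnergy (h : IsClassicalSolution γ τ T ρ u S) (hγ : γ ≠ 1)
    (hrest : HasPropagationSpeed M σ T ρ u S) (hσ : 0 ≤ σ) (ht : 0 < t) (htT : (t : EReal) < T) :
    HasDerivAt (totalEnergy γ τ ρ u S) (-∫ x, S (t, x) ^ 2) t := by
  rw [← integral_neg]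
  exact (h.isBalanceLaw_energy hγ).hasDerivAt_integral_of_expanding ht htT hσ
    (energyDensity_eq_zero_of_lt_abs hrest)
    (fun p hp hx => by rw [(hrest p hp hx).2.1, energyFlux, zero_mul])

lemma totalEnergy_nonneg (h : IsClassicalSolution γ τ T ρ u S) (hγ : 1 < γ) (hτ : 0 < τ)
    (ht : 0 ≤ t) (htT : (t : EReal) < T) : 0 ≤ totalEnergy γ τ ρ u S t :=
  integral_nonneg fun x => energyDensity_nonneg hγ hτ (h.density_pos (t, x) ⟨ht, htT⟩)

lemma hasDerivAt_correctedMoment (h : IsClassicalSolution γ τ T ρ u S) (hγ : γ ≠ 1)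
    (hrest : HasPropagationSpeed M σ T ρ u S) (hσ : 0 ≤ σ) (ht : 0 < t) (htT : (t : EReal) < T) :
    HasDerivAt (correctedMoment γ τ M σ θ ρ u S)
      ((∫ x, (ρ (t, x) * u (t, x) ^ 2 + ρ (t, x) ^ γ - 1 - S (t, x)))
        + (θ * (M + σ * t) + (∫ x, S (t, x) ^ 2) / (2 * θ))) t := by
  have hcorr : HasDerivAt (fun s : ℝ => θ * (M * s + σ * s ^ 2 / 2)) (θ * (M + σ * t)) t := by
    have hlin : HasDerivAt (fun s : ℝ => M * s) M t := hasDerivAt_const_mul M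
    have hquad : HasDerivAt (fun s : ℝ => σ * s ^ 2 / 2) (σ * t) t := by
      refine (((hasDerivAt_pow 2 t).const_mul σ).div_const 2).congr_deriv ?_
      norm_num
      ring
    exact (hlin.add hquad).const_mul θ
  refine (((h.hasDerivAt_momentumMoment hrest hσ ht htT).add hcorr).add
    (((h.hasDerivAt_totalEnergy hγ hrest hσ ht htT).const_sub
      (totalEnergy γ τ ρ u S 0)).div_const (2 * θ))).congr_deriv ?_
  rw [neg_neg, add_assoc]

lemma continuousOn_correctedMoment (h : IsClassicalSolution γ τ T ρ u S)
    (hrest : HasPropagationSpeed M σ T ρ u S) (hσ : 0 ≤ σ) (htT : (t : EReal) < T) :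
    ContinuousOn (correctedMoment γ τ M σ θ ρ u S) (Icc 0 t) := by
  have hF : ContinuousOn (momentumMoment ρ u) (Icc 0 t) :=
    continuousOn_integral_of_expanding h.isBalanceLaw_moment.contDiffOn_density.continuousOn htT hσ
      (M := M) fun p hp hx => by simp [(hrest p hp hx).2.1]
  have hE : ContinuousOn (totalEnergy γ τ ρ u S) (Icc 0 t) :=
    continuousOn_integral_of_expanding h.contDiffOn_energyDensity.continuousOn htT hσ
      (energyDensity_eq_zero_of_lt_abs hrest)
  unfold correctedMoment
  fun_prop

lemma sq_momentumMoment_div_le (h : IsClassicalSolution γ τ T ρ u S) (hγ : 1 ≤ γ)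
    (hrest : HasPropagationSpeed M σ T ρ u S) (hσ : 0 ≤ σ) (hM : 0 < M) (hθ : 0 < θ) (hP : 1 ≤ P)
    (hmass : 0 ≤ massExcess ρ 0) (hmassP : massExcess ρ 0 ≤ 2 * M * (P - 1)) (ht : 0 < t)
    (htT : (t : EReal) < T) :
    momentumMoment ρ u t ^ 2 / (2 * P * (M + σ * t) ^ 3)
      ≤ (∫ x, (ρ (t, x) * u (t, x) ^ 2 + ρ (t, x) ^ γ - 1 - S (t, x)))
        + (θ * (M + σ * t) + (∫ x, S (t, x) ^ 2) / (2 * θ)) := by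
  have hmem : ∀ x, (t, x) ∈ timeStrip T := fun x => ⟨ht.le, htT⟩
  have hmass_t := h.massExcess_eq hrest hσ ht htT
  have hσt : 0 ≤ σ * t := mul_nonneg hσ ht.le
  refine sq_moment_div_le_integral_momentumFlux hγ
    (continuous_slice h.contDiffOn_density.continuousOn hmem)
    (continuous_slice h.contDiffOn_velocity.continuousOn hmem)
    (continuous_slice h.contDiffOn_stress.continuousOn hmem)
    (fun x => h.density_pos _ (hmem x)) (by linarith) hθ
    (fun x hx => (hrest _ (hmem x) hx).1) (fun x hx => (hrest _ (hmem x) hx).2.1)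
    (fun x hx => (hrest _ (hmem x) hx).2.2) (hmass.trans_eq hmass_t.symm) ?_
  change 2 * (M + σ * t) + massExcess ρ t ≤ 2 * P * (M + σ * t)
  rw [hmass_t]
  linarith [mul_nonneg hσt (sub_nonneg.2 hP)]

/-- The value `2 * σ ^ 2 * P` of the Young parameter balances the two corrections. -/
lemma correctedMoment_le (h : IsClassicalSolution γ τ T ρ u S) (hγ : 1 < γ) (hτ : 0 < τ)
    (hσ : 0 < σ) (hM : 0 ≤ M) (hP : 0 < P) (hσP : 1 ≤ 8 * P * σ ^ 2)
    (henergy : totalEnergy γ τ ρ u S 0 ≤ 2 * σ * M ^ 2 * P) (ht : 0 ≤ t) (htM : t ≤ M / σ)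
    (htT : (t : EReal) < T) :
    correctedMoment γ τ M σ (2 * σ ^ 2 * P) ρ u S t
      ≤ momentumMoment ρ u t + 7 * σ * P * M ^ 2 := by
  have hσt : σ * t ≤ M := (le_div_iff₀' hσ).1 htM
  have : 0 ≤ σ * t := by positivity
  have hdrift : 2 * σ ^ 2 * P * (M * t + σ * t ^ 2 / 2) ≤ 3 * σ * P * M ^ 2 :=
    calc 2 * σ ^ 2 * P * (M * t + σ * t ^ 2 / 2)
        = σ * P * (2 * M * (σ * t) + (σ * t) ^ 2) := by ring
      _ ≤ σ * P * (2 * M * M + M ^ 2) := by gcongr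
      _ = 3 * σ * P * M ^ 2 := by ring
  have hdissipated : (totalEnergy γ τ ρ u S 0 - totalEnergy γ τ ρ u S t) / (2 * (2 * σ ^ 2 * P))
      ≤ 4 * σ * P * M ^ 2 := by
    rw [div_le_iff₀ (by positivity)]
    have henergy_t := h.totalEnergy_nonneg hγ hτ ht htT
    have := mul_le_mul_of_nonneg_left hσP (by positivity : 0 ≤ 2 * σ * M ^ 2 * P)
    linarith
  unfold correctedMoment
  linarith

end IsClassicalSolution

lemma hasDerivAt_neg_inv_mul_sq {P M σ t : ℝ} (hP : P ≠ 0) (hσ : σ ≠ 0) (hX : M + σ * t ≠ 0) :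
    HasDerivAt (fun s => -(4 * P * σ * (M + σ * s) ^ 2)⁻¹) (1 / (2 * P * (M + σ * t) ^ 3)) t := by
  have hlin : HasDerivAt (fun s => M + σ * s) σ t := (hasDerivAt_const_mul σ).const_add M
  refine (((hlin.pow 2).const_mul (4 * P * σ)).inv
    (mul_ne_zero (by positivity) (pow_ne_zero 2 hX))).neg.congr_deriv ?_
  simp only [Pi.pow_apply]
  field_simp
  norm_num
  ring

/-- The primitive of `(2 P (M + σ t)³)⁻¹` increases by `3 / (16 σ P M²)` over `[0, M / σ]`. -/
lemma lt_of_expanding_riccati {P M σ : ℝ} {y y' F : ℝ → ℝ} (hP : 0 < P) (hM : 0 < M) (hσ : 0 < σ)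
    (hy : ContinuousOn y (Icc 0 (M / σ))) (hy' : ∀ t ∈ Ioo 0 (M / σ), HasDerivAt y (y' t) t)
    (hriccati : ∀ t ∈ Ioo 0 (M / σ), F t ^ 2 / (2 * P * (M + σ * t) ^ 3) ≤ y' t)
    (hyF : ∀ t ∈ Icc 0 (M / σ), y t ≤ F t) : y 0 < 16 / 3 * (σ * P * M ^ 2) := by
  have hMσ : 0 ≤ M / σ := by positivity
  have hX : ∀ t ∈ Icc 0 (M / σ), 0 < M + σ * t := fun t ht => by
    have := ht.1
    positivity
  by_contra! hlarge
  have hmono : MonotoneOn y (Icc 0 (M / σ)) := by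
    refine monotoneOn_of_hasDerivWithinAt_nonneg (convex_Icc _ _) hy (f' := y') ?_ ?_
    all_goals
      rw [interior_Icc]
      intro t ht
    · exact (hy' t ht).hasDerivWithinAt
    · have := hX t (Ioo_subset_Icc_self ht)
      exact le_trans (by positivity) (hriccati t ht)
  have hpos : ∀ t ∈ Icc 0 (M / σ), 0 < y t := fun t ht =>
    (by positivity : 0 < 16 / 3 * (σ * P * M ^ 2)).trans_le
      (hlarge.trans (hmono (left_mem_Icc.2 hMσ) ht ht.1))
  have hΦ : ∀ t ∈ Icc 0 (M / σ), HasDerivAt (fun s => -(4 * P * σ * (M + σ * s) ^ 2)⁻¹)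
      (1 / (2 * P * (M + σ * t) ^ 3)) t := fun t ht =>
    hasDerivAt_neg_inv_mul_sq hP.ne' hσ.ne' (hX t ht).ne'
  have hgain := sub_lt_inv_of_riccati hMσ hy
    (fun t ht => (hΦ t ht).continuousAt.continuousWithinAt) hy'
    (fun t ht => hΦ t (Ioo_subset_Icc_self ht)) hpos fun t ht => by
      have htI := Ioo_subset_Icc_self ht
      have hXt := hX t htI
      refine le_trans ?_ (hriccati t ht)
      rw [one_div_mul_eq_div]
      have := pow_le_pow_left₀ (hpos t htI).le (hyF t htI) 2
      gcongr
  have hinv := inv_anti₀ (by positivity) hlarge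
  have hvalue : -(4 * P * σ * (M + σ * (M / σ)) ^ 2)⁻¹ - -(4 * P * σ * (M + σ * 0) ^ 2)⁻¹
      = (16 / 3 * (σ * P * M ^ 2))⁻¹ := by
    field_simp
    ring
  linarith

theorem IsClassicalSolution.lifespan_le {γ τ M σ P : ℝ} {T : EReal} {ρ u S : ℝ × ℝ → ℝ}
    (h : IsClassicalSolution γ τ T ρ u S) (hγ : 1 < γ) (hτ : 0 < τ) (hσ : 0 < σ)
    (hσ2 : γ + 1 / τ ≤ σ ^ 2) (hM : 0 < M) (hP : 1 ≤ P)
    (hrest : ∀ x, M ≤ |x| → AtRest ρ u S (0, x)) (hmass : 0 ≤ massExcess ρ 0)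
    (hmassP : massExcess ρ 0 ≤ 2 * M * (P - 1))
    (henergy : totalEnergy γ τ ρ u S 0 ≤ 2 * σ * M ^ 2 * P)
    (hmoment : 16 * σ * P * M ^ 2 < momentumMoment ρ u 0) : T ≤ ((M / σ : ℝ) : EReal) := by
  by_contra! hT
  have hP0 : 0 < P := by linarith
  have hσP : 1 ≤ 8 * P * σ ^ 2 := by
    have : 0 < 1 / τ := by positivity
    nlinarith
  have hspeed := h.hasPropagationSpeed hγ hτ hσ hσ2 hrest
  have hbefore : ∀ t ≤ M / σ, (t : EReal) < T := fun t ht =>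
    (EReal.coe_le_coe_iff.2 ht).trans_lt hT
  have hsmall := lt_of_expanding_riccati hP0 hM hσ
    (y := fun t => correctedMoment γ τ M σ (2 * σ ^ 2 * P) ρ u S t - 7 * σ * P * M ^ 2)
    ((h.continuousOn_correctedMoment hspeed hσ.le hT).sub continuousOn_const)
    (fun t ht => (h.hasDerivAt_correctedMoment hγ.ne' hspeed hσ.le ht.1
      (hbefore t ht.2.le)).sub_const _)
    (fun t ht => h.sq_momentumMoment_div_le hγ.le hspeed hσ.le hM (by positivity) hP hmass hmassP
      ht.1 (hbefore t ht.2.le))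
    (fun t ht => sub_le_iff_le_add.2 (h.correctedMoment_le hγ hτ hσ hM.le hP0 hσP henergy
      ht.1 ht.2 (hbefore t ht.2)))
  simp only [correctedMoment, sub_self, zero_div, mul_zero, ne_eq, OfNat.ofNat_ne_zero,
    not_false_eq_true, zero_pow, add_zero] at hsmall
  have : 0 < σ * P * M ^ 2 := by positivity
  linarith

/-! ### Large data -/

section LargeData

variable {r v s : ℝ → ℝ} {γ τ X P a b L : ℝ}

lemma integral_energyDensity_le (hr : Continuous r) (hv : Continuous v) (hs : Continuous s)
    (hpos : ∀ x, 0 < r x) (hrP : ∀ x, r x ≤ P) (hvL : ∀ x, |v x| ≤ L) (hX : 0 ≤ X)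
    (hrX : ∀ x, X < |x| → r x = 1) (hvX : ∀ x, X < |x| → v x = 0)
    (hsX : ∀ x, X < |x| → s x = 0) :
    ∫ x, energyDensity γ τ (r x) (v x) (s x)
      ≤ (∫ x, (internalEnergy γ (r x) + τ * r x * s x ^ 2 / 2)) + P * L ^ 2 * X := by
  have hpow : Continuous fun x => r x ^ γ := hr.rpow_const fun x => Or.inl (hpos x).ne'
  have hint : Continuous fun x => internalEnergy γ (r x) := by unfold internalEnergy; fun_prop
  have hkinetic : Integrable fun x => P / 2 * v x ^ 2 :=
    integrable_of_eq_zero_of_lt_abs (X := X) (by fun_prop) fun x hx => by simp [hvX x hx]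
  have hpotential : Integrable fun x => internalEnergy γ (r x) + τ * r x * s x ^ 2 / 2 :=
    integrable_of_eq_zero_of_lt_abs (X := X) (by fun_prop) fun x hx => by
      simp [internalEnergy, hrX x hx, hsX x hx]
  have htotal : Integrable fun x => energyDensity γ τ (r x) (v x) (s x) :=
    integrable_of_eq_zero_of_lt_abs (X := X) (by unfold energyDensity; fun_prop) fun x hx => by
      rw [hrX x hx, hvX x hx, hsX x hx, energyDensity_ref]
  have hv2 : ∫ x, v x ^ 2 ≤ 2 * X * L ^ 2 :=
    integral_le_mul_of_le (by fun_prop) hX (fun x hx => by simp [hvX x hx])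
      fun x => sq_le_sq.2 ((hvL x).trans (le_abs_self L))
  calc ∫ x, energyDensity γ τ (r x) (v x) (s x)
      ≤ ∫ x, (internalEnergy γ (r x) + τ * r x * s x ^ 2 / 2 + P / 2 * v x ^ 2) := by
        refine integral_mono htotal (hpotential.fun_add hkinetic) fun x => ?_
        have := mul_le_mul_of_nonneg_right (hrP x) (sq_nonneg (v x))
        simp only [energyDensity]
        linarith
    _ = (∫ x, (internalEnergy γ (r x) + τ * r x * s x ^ 2 / 2)) + P / 2 * ∫ x, v x ^ 2 := by
        rw [integral_add hpotential hkinetic, integral_const_mul]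
    _ ≤ (∫ x, (internalEnergy γ (r x) + τ * r x * s x ^ 2 / 2)) + P / 2 * (2 * X * L ^ 2) := by
        have : 0 ≤ P := (hpos 0).le.trans (hrP 0)
        gcongr
    _ = (∫ x, (internalEnergy γ (r x) + τ * r x * s x ^ 2 / 2)) + P * L ^ 2 * X := by ring

lemma neg_le_intervalIntegral_moment {p q : ℝ} (hr : ∀ x, 0 ≤ r x) (hrb : ∀ x, r x ≤ b)
    (hvL : ∀ x, |v x| ≤ L) (hp : 0 ≤ p) (hpq : p ≤ q) (hlen : q ≤ p + 1) :
    -(b * L * q) ≤ ∫ x in p..q, x * (r x * v x) := by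
  have hb : 0 ≤ b := (hr 0).trans (hrb 0)
  have hL : 0 ≤ L := (abs_nonneg _).trans (hvL 0)
  have hq : 0 ≤ q := hp.trans hpq
  have hnorm : ‖∫ x in p..q, x * (r x * v x)‖ ≤ q * (b * L) * |q - p| := by
    refine intervalIntegral.norm_integral_le_of_norm_le_const fun x hx => ?_
    rw [uIoc_of_le hpq] at hx
    rw [norm_mul, norm_mul, Real.norm_of_nonneg (hp.trans hx.1.le), Real.norm_of_nonneg (hr x)]
    exact mul_le_mul hx.2 (mul_le_mul (hrb x) (hvL x) (norm_nonneg _) hb)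
      (mul_nonneg (hr x) (norm_nonneg _)) hq
  have hlength : q * (b * L) * |q - p| ≤ b * L * q := by
    rw [abs_of_nonneg (sub_nonneg.2 hpq), mul_comm q]
    exact mul_le_of_le_one_right (by positivity) (by linarith)
  exact (neg_le_neg (hnorm.trans hlength)).trans (neg_abs_le _)

lemma le_intervalIntegral_moment_of_plateau (hr : Continuous r) (hv : Continuous v) (ha : 0 < a)
    (har : ∀ x, a ≤ r x) (hrb : ∀ x, r x ≤ b) (hvL : ∀ x, |v x| ≤ L) (hX : 16 * b ≤ a * X)
    (hplateau : ∀ x ∈ Icc 1 (X - 1), v x = L) :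
    L / 4 * a * X ^ 2 ≤ ∫ x in 0..X, x * (r x * v x) := by
  have hab : a ≤ b := (har 0).trans (hrb 0)
  have hX16 : 16 ≤ X := by nlinarith
  have hL : 0 ≤ L := (abs_nonneg _).trans (hvL 0)
  have hint : ∀ p q, IntervalIntegrable (fun x => x * (r x * v x)) volume p q := fun p q =>
    Continuous.intervalIntegrable (by fun_prop) p q
  have hmiddle : a * L * (((X - 1) ^ 2 - 1 ^ 2) / 2) ≤ ∫ x in 1..(X - 1), x * (r x * v x) := by
    rw [← integral_id, ← intervalIntegral.integral_const_mul]
    refine intervalIntegral.integral_mono_on (by linarith)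
      (Continuous.intervalIntegrable (by fun_prop) _ _) (hint _ _) fun x hx => ?_
    rw [hplateau x hx]
    have := mul_le_mul_of_nonneg_right (har x) (mul_nonneg (zero_le_one.trans hx.1) hL)
    linarith
  rw [← intervalIntegral.integral_add_adjacent_intervals (hint 0 (X - 1)) (hint (X - 1) X),
    ← intervalIntegral.integral_add_adjacent_intervals (hint 0 1) (hint 1 (X - 1))]
  have hinner := neg_le_intervalIntegral_moment (p := 0) (q := 1)
    (fun x => (ha.trans_le (har x)).le) hrb hvL le_rfl zero_le_one (by norm_num)
  have houter := neg_le_intervalIntegral_moment (p := X - 1) (q := X)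
    (fun x => (ha.trans_le (har x)).le) hrb hvL (by linarith) (by linarith) (by linarith)
  have hLb : 16 * b * (L * (X + 1)) ≤ a * X * (L * (X + 1)) := by gcongr
  have hLa : 0 ≤ a * L * X * (X - 16) :=
    mul_nonneg (by positivity) (sub_nonneg.2 hX16)
  have : 0 ≤ a * L * X := by positivity
  linarith

lemma le_integral_moment_of_odd_plateau (hr : Continuous r) (hv : Continuous v) (ha : 0 < a)
    (har : ∀ x, a ≤ r x) (hrb : ∀ x, r x ≤ b) (hvL : ∀ x, |v x| ≤ L) (hX : 16 * b ≤ a * X)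
    (hodd : ∀ x, v (-x) = -v x) (hplateau : ∀ x ∈ Icc 1 (X - 1), v x = L)
    (hvX : ∀ x, X < |x| → v x = 0) :
    L / 2 * a * X ^ 2 ≤ ∫ x, x * (r x * v x) := by
  have hX0 : 0 ≤ X := by nlinarith [(har 0).trans (hrb 0)]
  have hint : ∀ p q, IntervalIntegrable (fun x => x * (r x * v x)) volume p q := fun p q =>
    Continuous.intervalIntegrable (by fun_prop) p q
  have hleft : ∫ x in (-X)..0, x * (r x * v x) = ∫ x in 0..X, x * (r (-x) * v x) := by
    have hreflect := intervalIntegral.integral_comp_neg (a := 0) (b := X)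
      fun x => x * (r x * v x)
    simpa [hodd] using hreflect.symm
  rw [← setIntegral_Icc_neg_of_eq_zero (X := X) fun x hx => by simp [hvX x hx],
    integral_Icc_eq_integral_Ioc, ← intervalIntegral.integral_of_le (by linarith),
    ← intervalIntegral.integral_add_adjacent_intervals (hint (-X) 0) (hint 0 X), hleft]
  have hright := le_intervalIntegral_moment_of_plateau hr hv ha har hrb hvL hX hplateau
  have hreflected := le_intervalIntegral_moment_of_plateau (hr.comp continuous_neg) hv ha
    (fun x => har (-x)) (fun x => hrb (-x)) hvL hX hplateau
  simp only [Function.comp_def] at hreflected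
  linarith

lemma sixteen_mul_le_of_large {σ : ℝ} (hσ : 0 < σ) (hX : 0 < X) (ha : 0 ≤ a) (hb : 0 < b)
    (hL1 : 1 ≤ L) (hL : 16 * σ * b ≤ L / 2 * a) (hLX : b * L ^ 2 * X ≤ 2 * σ * X ^ 2 * b) :
    16 * b ≤ a * X := by
  have hL2 : L ^ 2 ≤ 2 * σ * X := le_of_mul_le_mul_right (by linarith) (mul_pos hb hX)
  refine le_of_mul_le_mul_left ?_ hσ
  calc σ * (16 * b) = 16 * σ * b * 1 := by ring
    _ ≤ L / 2 * a * L := by gcongr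
    _ = L ^ 2 * a / 2 := by ring
    _ ≤ 2 * σ * X * a / 2 := by gcongr
    _ = σ * (a * X) := by ring

end LargeData

theorem blow_up_for_large_data_general {γ τ : ℝ} (hγ : 1 < γ) (hτ : 0 < τ) {T : EReal} (hT : 0 < T)
    {ρ u S : ℝ × ℝ → ℝ} (h : IsClassicalSolution γ τ T ρ u S) {ρ0 u0 S0 : ℝ → ℝ}
    (hinit : ∀ x, ρ (0, x) = ρ0 x ∧ u (0, x) = u0 x ∧ S (0, x) = S0 x) {M : ℝ} (hM : 0 < M)
    (hout : ∀ x, M ≤ |x| → ρ0 x = 1 ∧ S0 x = 0) (hmass0 : 0 ≤ ∫ x, (ρ0 x - 1)) {Pmax Pmin : ℝ}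
    (hPmax : IsGreatest (range ρ0) Pmax) (hPmin : IsLeast (range ρ0) Pmin)
    {σ L : ℝ} (hσ : 0 < σ) (hσ2 : γ + 1 / τ ≤ σ ^ 2) (hL : 16 * σ * Pmax < L / 2 * Pmin)
    (hMbig : (∫ x, (internalEnergy γ (ρ0 x) + τ * ρ0 x * S0 x ^ 2 / 2)) + Pmax * L ^ 2 * M
      ≤ 2 * σ * M ^ 2 * Pmax)
    (hu0odd : ∀ x, u0 (-x) = -u0 x) (hu0bdd : ∀ x, |u0 x| ≤ L)
    (hu0plateau : ∀ x ∈ Icc 1 (M - 1), u0 x = L) (hu0supp : ∀ x, M ≤ |x| → u0 x = 0) :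
    T ≤ ((M / σ : ℝ) : EReal) := by
  obtain ⟨rfl, rfl, rfl⟩ : (fun x => ρ (0, x)) = ρ0 ∧ (fun x => u (0, x)) = u0 ∧
      (fun x => S (0, x)) = S0 :=
    ⟨funext fun x => (hinit x).1, funext fun x => (hinit x).2.1, funext fun x => (hinit x).2.2⟩
  have hmem : ∀ x : ℝ, ((0 : ℝ), x) ∈ timeStrip T := fun x => ⟨le_rfl, hT⟩
  have hρ := continuous_slice h.contDiffOn_density.continuousOn hmem
  have hu := continuous_slice h.contDiffOn_velocity.continuousOn hmem
  have hS := continuous_slice h.contDiffOn_stress.continuousOn hmem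
  have hρM : ∀ x, M < |x| → ρ (0, x) = 1 := fun x hx => (hout x hx.le).1
  have huM : ∀ x, M < |x| → u (0, x) = 0 := fun x hx => hu0supp x hx.le
  have hSM : ∀ x, M < |x| → S (0, x) = 0 := fun x hx => (hout x hx.le).2
  have hρpos : ∀ x, 0 < ρ (0, x) := fun x => h.density_pos _ (hmem x)
  have hmax : ∀ x, ρ (0, x) ≤ Pmax := fun x => hPmax.2 ⟨x, rfl⟩
  have hmin : ∀ x, Pmin ≤ ρ (0, x) := fun x => hPmin.2 ⟨x, rfl⟩
  obtain ⟨z, hz⟩ : Pmin ∈ range fun x => ρ (0, x) := hPmin.1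
  have hPmin0 : 0 < Pmin := hz ▸ hρpos z
  have hPmin1 : Pmin ≤ 1 := (hout M (le_abs_self M)).1 ▸ hmin M
  have hPmax1 : 1 ≤ Pmax := (hout M (le_abs_self M)).1 ▸ hmax M
  have hσ1 : 1 ≤ σ := by
    have : 0 < 1 / τ := by positivity
    nlinarith
  have hL1 : 1 ≤ L := by
    have hL0 : 0 < L := (by_contra fun hL0 => by nlinarith)
    nlinarith
  have hpotential : 0 ≤ ∫ x, (internalEnergy γ (ρ (0, x)) + τ * ρ (0, x) * S (0, x) ^ 2 / 2) :=
    integral_nonneg fun x => by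
      have := internalEnergy_nonneg hγ (hρpos x)
      have := hρpos x
      positivity
  have hwide := sixteen_mul_le_of_large hσ hM hPmin0.le (by linarith) hL1 hL.le (by linarith)
  refine h.lifespan_le hγ hτ hσ hσ2 hM hPmax1
    (fun x hx => ⟨(hout x hx).1, hu0supp x hx, (hout x hx).2⟩) hmass0 ?_ ?_ ?_
  · exact integral_le_mul_of_le (hρ.sub continuous_const) hM.le
      (fun x hx => sub_eq_zero.2 (hρM x hx)) fun x => sub_le_sub_right (hmax x) 1
  · exact (integral_energyDensity_le hρ hu hS hρpos hmax hu0bdd hM.le hρM huM hSM).trans hMbig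
  · calc 16 * σ * Pmax * M ^ 2 < L / 2 * Pmin * M ^ 2 := by gcongr
      _ ≤ momentumMoment ρ u 0 :=
        le_integral_moment_of_odd_plateau hρ hu hPmin0 hmin hmax hu0bdd hwide hu0odd
          hu0plateau huM

/-- Blow-up of solutions of the relaxation system for some large data: under the
largeness conditions on the plateau velocity profile `u₀` and the support parameter
`M`, no solution with initial data `(ρ₀, u₀, S₀)` can exist globally in time,
i.e. the existence time `T` is finite. -/
theorem blow_up_for_large_data
    (γ τ R : ℝ) (hγ : 1 < γ) (hτ : 0 < τ) (hR : 0 < R)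
    (ρ0 S0 : ℝ → ℝ) (hρ0reg : ContDiff ℝ 1 ρ0) (hS0reg : ContDiff ℝ 1 S0)
    (hρ0pos : ∀ x : ℝ, 0 < ρ0 x)
    (hout : ∀ x : ℝ, R ≤ |x| → ρ0 x = 1 ∧ S0 x = 0)
    (hmass0 : 0 ≤ ∫ x : ℝ, (ρ0 x - 1))
    (Pmax Pmin : ℝ)
    (hPmax : IsGreatest (Set.range ρ0) Pmax) (hPmin : IsLeast (Set.range ρ0) Pmin)
    (σ σt L : ℝ) (hσ : σ = Real.sqrt (γ + 1 / τ))
    (hσtpos : 0 < σt) (hσt : σt ^ 2 = max (σ ^ 2) (1 / (8 * Pmax)))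
    (hL : 0 < L)
    (hLbig : max (Real.sqrt (8 * Pmax)) (16 * σt * Pmax) < L / 2 * Pmin)
    (H0 : ℝ)
    (hH0 : H0 = ∫ x : ℝ,
      ((ρ0 x ^ γ - 1 - γ * (ρ0 x - 1)) / (γ - 1) + τ * ρ0 x * S0 x ^ 2 / 2))
    (M : ℤ) (hMeven : Even M) (hM4 : 4 ≤ M) (hMR : R ≤ (M : ℝ))
    (hMbig : H0 + Pmax * L ^ 2 * (M : ℝ) ≤ 2 * σt * (M : ℝ) ^ 2 * Pmax)
    (u0 : ℝ → ℝ) (hu0reg : ContDiff ℝ 1 u0)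
    (hu0odd : ∀ x : ℝ, u0 (-x) = - u0 x)
    (hu0bdd : ∀ x : ℝ, |u0 x| ≤ L)
    (hu0plateau : ∀ x ∈ Set.Icc (1 : ℝ) ((M : ℝ) - 1), u0 x = L)
    (hu0supp : ∀ x : ℝ, (M : ℝ) ≤ |x| → u0 x = 0)
    (hu0L2 : (∫ x : ℝ, u0 x ^ 2) ≤ 2 * L ^ 2 * (M : ℝ))
    (T : EReal) (hT : 0 < T)
    (ρ u S : ℝ × ℝ → ℝ)
    (hρ : ContDiffOn ℝ 1 ρ {p : ℝ × ℝ | 0 ≤ p.1 ∧ (p.1 : EReal) < T})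
    (hu : ContDiffOn ℝ 1 u {p : ℝ × ℝ | 0 ≤ p.1 ∧ (p.1 : EReal) < T})
    (hS : ContDiffOn ℝ 1 S {p : ℝ × ℝ | 0 ≤ p.1 ∧ (p.1 : EReal) < T})
    (hpos : ∀ p : ℝ × ℝ, 0 ≤ p.1 → (p.1 : EReal) < T → 0 < ρ p)
    (hmass : ∀ p : ℝ × ℝ, 0 ≤ p.1 → (p.1 : EReal) < T →
      pderivT T ρ p + pderivX (fun q => ρ q * u q) p = 0)
    (hmom : ∀ p : ℝ × ℝ, 0 ≤ p.1 → (p.1 : EReal) < T →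
      ρ p * pderivT T u p + ρ p * u p * pderivX u p + pderivX (fun q => ρ q ^ γ) p
        = pderivX S p)
    (hrelax : ∀ p : ℝ × ℝ, 0 ≤ p.1 → (p.1 : EReal) < T →
      τ * ρ p * (pderivT T S p + u p * pderivX S p) - pderivX u p = - S p)
    (hinit : ∀ x : ℝ, ρ (0, x) = ρ0 x ∧ u (0, x) = u0 x ∧ S (0, x) = S0 x)
    (hbdd : ∀ t : ℝ, 0 ≤ t → (t : EReal) < T → ∃ C : ℝ,
      ∀ s ∈ Set.Icc (0 : ℝ) t, ∀ x : ℝ,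
        |ρ (s, x)| ≤ C ∧ |u (s, x)| ≤ C ∧ |S (s, x)| ≤ C ∧
        |pderivT T ρ (s, x)| ≤ C ∧ |pderivT T u (s, x)| ≤ C ∧ |pderivT T S (s, x)| ≤ C ∧
        |pderivX ρ (s, x)| ≤ C ∧ |pderivX u (s, x)| ≤ C ∧ |pderivX S (s, x)| ≤ C) :
    T < ⊤ := by
  subst hH0
  exact (blow_up_for_large_data_general hγ hτ hT ⟨hρ, hu, hS, fun p hp => hpos p hp.1 hp.2,
    fun p hp => hmass p hp.1 hp.2, fun p hp => hmom p hp.1 hp.2, fun p hp => hrelax p hp.1 hp.2⟩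
    hinit (M := M) (by positivity) (fun x hx => hout x (hMR.trans hx)) hmass0 hPmax hPmin hσtpos
    (by rw [hσt, hσ, Real.sq_sqrt (by positivity)]; exact le_max_left _ _)
    ((le_max_right _ _).trans_lt hLbig) hMbig hu0odd hu0bdd hu0plateau hu0supp).trans_lt
    (EReal.coe_lt_top _)
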